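/- arXiv:2402.02575 — 2 statements merged into one kernel-verified Lean document; each statement's English description precedes it below -/
import Mathlib

section
/- For every ε > 0 there exists an fiid labelling f : X → (V → Fin 4) of the 4-regular tree T_4 such that for μ-a.e. x ∈ X the labelling f(x) is a proper coloring of G (i.e. f(x)(u) ≠ f(x)(v) whenever u and v are adjacent), and such that for every vertex v ∈ V, μ({x : f(x)(v) = 3}) < ε. -/
open MeasureTheory

namespace T4
variable {V : Type} {G : SimpleGraph V}

lemma step_unique (hT : G.IsTree) {a w w' b : V} (h : G.Adj a w) (h' : G.Adj a w')
    (hd : G.dist w b + 1 = G.dist a b) (hd' : G.dist w' b + 1 = G.dist a b) : w = w' := by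
  obtain ⟨p, hp⟩ := hT.connected.exists_walk_length_eq_dist w b
  obtain ⟨p', hp'⟩ := hT.connected.exists_walk_length_eq_dist w' b
  have h1 : (SimpleGraph.Walk.cons h p).IsPath :=
    SimpleGraph.Walk.isPath_of_length_eq_dist _ (by simp [hp, hd])
  have h2 : (SimpleGraph.Walk.cons h' p').IsPath :=
    SimpleGraph.Walk.isPath_of_length_eq_dist _ (by simp [hp', hd'])
  have := (hT.isAcyclic.subsingleton_path _ _).elim ⟨_, h1⟩ ⟨_, h2⟩
  simp only [Subtype.mk.injEq, SimpleGraph.Walk.cons.injEq] at this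
  exact this.1

lemma exists_step (hT : G.IsTree) {a b : V} (h : a ≠ b) :
    ∃ w, G.Adj a w ∧ G.dist w b + 1 = G.dist a b := by
  obtain ⟨p, hp⟩ := hT.connected.exists_walk_length_eq_dist a b
  cases p with
  | nil => exact absurd rfl h
  | @cons _ w _ h p =>
    refine ⟨w, h, ?_⟩
    simp only [SimpleGraph.Walk.length_cons] at hp
    have h1 := SimpleGraph.dist_le p
    have h2 := hT.connected.dist_triangle (u := a) (v := w) (w := b)
    rw [SimpleGraph.dist_eq_one_iff_adj.2 h] at h2
    omega

lemma adj_dist (hT : G.IsTree) {a w : V} (h : G.Adj a w) (b : V) :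
    G.dist w b = G.dist a b + 1 ∨ G.dist w b + 1 = G.dist a b := by
  have := hT.dist_eq_dist_add_one_of_adj b h
  rw [G.dist_comm (u := w), G.dist_comm (u := a)]
  omega

/-- betweenness: if `a` is the step from `w` to `b`, points between `w` and `b` other than `w`
are between `a` and `b`. -/
lemma between_step (hT : G.IsTree) {a w b z : V} (h : G.Adj w a)
    (hd : G.dist a b + 1 = G.dist w b) (hz : G.dist w z + G.dist z b = G.dist w b) (hne : z ≠ w) :
    G.dist a z + 1 = G.dist w z := by
  obtain ⟨y, hy, hyz⟩ := exists_step hT hne.symm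
  have h2 := hT.connected.dist_triangle (u := y) (v := z) (w := b)
  have h3 : G.dist y b + 1 = G.dist w b := by
    rcases adj_dist hT hy b with h | h <;> omega
  rw [step_unique hT h hy hd h3]; exact hyz

def PIso (G : SimpleGraph V) (P : Set (V × V)) : Prop :=
  (∀ p ∈ P, ∀ r ∈ P, G.dist p.1 r.1 = G.dist p.2 r.2) ∧
  (∀ p ∈ P, ∀ r ∈ P, ∀ z, G.dist p.1 z + G.dist z r.1 = G.dist p.1 r.1 → ∃ z', (z, z') ∈ P)

lemma PIso.extend (hT : G.IsTree) (hreg : ∀ v : V, (G.neighborSet v).ncard = 4)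
    {P : Set (V × V)} (hP : PIso G P) {a a' w : V} (ha : (a, a') ∈ P) (haw : G.Adj a w)
    (hw : ∀ w', (w, w') ∉ P) : ∃ w', PIso G (insert (w, w') P) := by
  have hfin : ∀ v, (G.neighborSet v).Finite := fun v =>
    Set.finite_of_ncard_pos (by rw [hreg v]; norm_num)
  obtain ⟨h1, h2⟩ := hP
  -- find a fresh neighbour
  have hfresh : ∃ w', G.Adj a' w' ∧ ∀ y, (y, w') ∉ P := by
    by_contra hcon
    push Not at hcon
    choose! g hg using hcon
    have hmaps : Set.MapsTo g (G.neighborSet a') (G.neighborSet a \ {w}) := by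
      intro y hy
      have hy' := hg y hy
      refine ⟨?_, ?_⟩
      · have := h1 _ ha _ hy'
        simp only at this
        rw [SimpleGraph.dist_eq_one_iff_adj.2 hy] at this
        exact SimpleGraph.dist_eq_one_iff_adj.1 this
      · rintro rfl
        exact hw _ hy'
    have hinj : Set.InjOn g (G.neighborSet a') := by
      intro y hy y' hy' hh
      have e := h1 _ (hg y hy) _ (hg y' hy')
      simp only [hh, SimpleGraph.dist_self] at e
      exact (hT.connected.dist_eq_zero_iff).1 e.symm
    have := Set.ncard_le_ncard_of_injOn g hmaps hinj ((hfin a).subset Set.sdiff_subset)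
    rw [Set.ncard_sdiff_singleton_of_mem (show w ∈ G.neighborSet a from haw), hreg, hreg] at this
    omega
  obtain ⟨w', haw', hw'⟩ := hfresh
  have hdw : ∀ p ∈ P, G.dist w p.1 = G.dist a p.1 + 1 := by
    intro p hp
    rcases adj_dist hT haw p.1 with h | h
    · exact h
    · obtain ⟨z', hz'⟩ := h2 _ ha _ hp w (by
        simp only [SimpleGraph.dist_eq_one_iff_adj.2 haw]; omega)
      exact absurd hz' (hw _)
  have hdw' : ∀ p ∈ P, G.dist w' p.2 = G.dist a' p.2 + 1 := by
    intro p hp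
    rcases adj_dist hT haw' p.2 with h | h
    · exact h
    · have e := h1 _ ha _ hp
      simp only at e
      have hne : a ≠ p.1 := by
        intro hh
        rw [hh, SimpleGraph.dist_self] at e
        omega
      obtain ⟨y, hy, hyd⟩ := exists_step hT hne
      obtain ⟨y', hy'⟩ := h2 _ ha _ hp y (by
        simp only [SimpleGraph.dist_eq_one_iff_adj.2 hy]; omega)
      have e1 := h1 _ ha _ hy'
      have e2 := h1 _ hy' _ hp
      simp only at e1 e2
      rw [SimpleGraph.dist_eq_one_iff_adj.2 hy] at e1
      have : w' = y' := step_unique hT haw' (SimpleGraph.dist_eq_one_iff_adj.1 e1.symm) h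
        (by omega)
      exact absurd (this ▸ hy') (hw' y)
  refine ⟨w', ?_, ?_⟩
  · rintro p (rfl | hp) r (rfl | hr)
    · simp
    · simp only [hdw r hr, hdw' r hr, h1 _ ha _ hr]
    · simp only [G.dist_comm (u := p.1), G.dist_comm (u := p.2), hdw p hp, hdw' p hp, h1 _ ha _ hp]
    · exact h1 _ hp _ hr
  · have key : ∀ r ∈ P, ∀ z, G.dist w z + G.dist z r.1 = G.dist w r.1 →
        ∃ z', (z, z') ∈ insert (w, w') P := by
      intro r hr z hz
      by_cases hzw : z = w
      · exact ⟨w', by simp [hzw]⟩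
      · have hh := hdw r hr
        have := between_step hT haw.symm hh.symm hz hzw
        obtain ⟨z', hz'⟩ := h2 _ ha _ hr z (by simp only; omega)
        exact ⟨z', Set.mem_insert_of_mem _ hz'⟩
    rintro p (rfl | hp) r (rfl | hr) z hz
    · simp only [SimpleGraph.dist_self] at hz
      have : G.dist w z = 0 := by omega
      rw [hT.connected.dist_eq_zero_iff] at this
      exact ⟨w', by simp [this]⟩
    · exact key r hr z hz
    · refine key p hp z ?_
      simp only at hz
      rw [G.dist_comm (u := w) (v := z), G.dist_comm (v := p.1) (u := z),
        G.dist_comm (v := p.1) (u := w)]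
      omega
    · obtain ⟨z', hz'⟩ := h2 p hp r hr z hz
      exact ⟨z', Set.mem_insert_of_mem _ hz'⟩

lemma PIso.exists_iso (hT : G.IsTree) (hreg : ∀ v : V, (G.neighborSet v).ncard = 4)
    {P : Set (V × V)} (hP : PIso G P) (hne : P.Nonempty) :
    ∃ φ : G ≃g G, ∀ p ∈ P, φ p.1 = p.2 := by
  obtain ⟨M, hPM, hM⟩ := zorn_subset_nonempty {P | PIso G P} (by
    intro C hC hchain hCne
    refine ⟨⋃₀ C, ⟨?_, ?_⟩, fun s hs => Set.subset_sUnion_of_mem hs⟩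
    · rintro p ⟨s, hs, hp⟩ r ⟨t, ht, hr⟩
      rcases hchain.total hs ht with h | h
      · exact (hC ht).1 p (h hp) r hr
      · exact (hC hs).1 p hp r (h hr)
    · rintro p ⟨s, hs, hp⟩ r ⟨t, ht, hr⟩ z hz
      rcases hchain.total hs ht with h | h
      · obtain ⟨z', hz'⟩ := (hC ht).2 p (h hp) r hr z hz
        exact ⟨z', t, ht, hz'⟩
      · obtain ⟨z', hz'⟩ := (hC hs).2 p hp r (h hr) z hz
        exact ⟨z', s, hs, hz'⟩) P hP
  have hMP : PIso G M := hM.prop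
  have htot : ∀ w, ∃ w', (w, w') ∈ M := by
    by_contra hcon
    push Not at hcon
    obtain ⟨w, hw⟩ := hcon
    obtain ⟨p0, hp0⟩ := hne
    obtain ⟨q⟩ := hT.connected p0.1 w
    obtain ⟨d, -, hd1, hd2⟩ := q.exists_boundary_dart {z | ∃ z', (z, z') ∈ M}
      ⟨p0.2, hPM hp0⟩ (by simpa using hw)
    obtain ⟨a', ha'⟩ := hd1
    obtain ⟨w', hw'⟩ := hMP.extend hT hreg ha' d.adj (by simpa using hd2)
    have := hM.eq_of_subset hw' (Set.subset_insert _ _)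
    apply hd2
    exact ⟨w', by rw [this]; exact Set.mem_insert _ _⟩
  choose f hf using htot
  have hiso : ∀ a b, G.dist (f a) (f b) = G.dist a b := fun a b =>
    (hMP.1 _ (hf a) _ (hf b)).symm
  have hinj : Function.Injective f := by
    intro a b hab
    have := hiso a b
    rw [hab, SimpleGraph.dist_self] at this
    exact (hT.connected.dist_eq_zero_iff).1 this.symm
  have hadj : ∀ a b, G.Adj (f a) (f b) ↔ G.Adj a b := fun a b => by
    rw [← SimpleGraph.dist_eq_one_iff_adj, hiso, SimpleGraph.dist_eq_one_iff_adj]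
  have hsurj : Function.Surjective f := by
    by_contra hcon
    simp only [Function.Surjective] at hcon
    push Not at hcon
    obtain ⟨w, hw⟩ := hcon
    obtain ⟨p0, hp0⟩ := hne
    obtain ⟨q⟩ := hT.connected (f p0.1) w
    obtain ⟨d, -, hd1, hd2⟩ := q.exists_boundary_dart (Set.range f)
      ⟨p0.1, rfl⟩ (by simpa using hw)
    obtain ⟨a, ha⟩ := hd1
    have hsub : f '' G.neighborSet a ⊆ G.neighborSet (f a) := by
      rintro _ ⟨b, hb, rfl⟩
      exact (hadj a b).2 hb
    have heq := Set.eq_of_subset_of_ncard_le hsub (by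
      rw [Set.ncard_image_of_injective _ hinj, hreg, hreg])
      (Set.finite_of_ncard_pos (by rw [hreg]; norm_num))
    have : d.snd ∈ G.neighborSet (f a) := by rw [ha]; exact d.adj
    rw [← heq] at this
    obtain ⟨b, -, hb⟩ := this
    exact hd2 ⟨b, hb⟩
  refine ⟨⟨Equiv.ofBijective f ⟨hinj, hsurj⟩, fun {a b} => hadj a b⟩, ?_⟩
  intro p hp
  show f p.1 = p.2
  have := hMP.1 _ (hf p.1) _ (hPM hp)
  simp only [SimpleGraph.dist_self] at this
  exact (hT.connected.dist_eq_zero_iff).1 this.symm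

/-- points on a common geodesic -/
lemma geo_dist (hT : G.IsTree) {u v : V} : ∀ (n : ℕ) (z y : V), G.dist u z = n →
    G.dist u z + G.dist z v = G.dist u v → G.dist u y + G.dist y v = G.dist u v →
    G.dist u z ≤ G.dist u y → G.dist u z + G.dist z y = G.dist u y := by
  intro n
  induction n generalizing u with
  | zero =>
    intro z y h _ _ _
    have : u = z := (hT.connected.dist_eq_zero_iff).1 h
    subst this; simp
  | succ n ih =>
    intro z y h hz hy hle
    have huv : u ≠ v := by
      rintro rfl
      rw [G.dist_self] at hz; omega
    obtain ⟨w, hw, hwd⟩ := exists_step hT huv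
    have hzu : z ≠ u := by rintro rfl; simp at h
    have hyu : y ≠ u := by rintro rfl; rw [G.dist_self] at hle; omega
    have e1 := between_step hT hw hwd hz hzu
    have e2 := between_step hT hw hwd hy hyu
    have := ih (u := w) z y (by omega) (by omega) (by omega) (by omega)
    omega

lemma exists_swap (hT : G.IsTree) (hreg : ∀ v : V, (G.neighborSet v).ncard = 4) (u v : V) :
    ∃ φ : G ≃g G, φ u = v ∧ φ v = u := by
  let P : Set (V × V) := {p | G.dist u p.1 + G.dist p.1 v = G.dist u v ∧
    G.dist u p.2 + G.dist p.2 v = G.dist u v ∧ G.dist u p.1 = G.dist p.2 v}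
  have hgeo := fun z y => geo_dist hT (u := u) (v := v) _ z y rfl
  have hex : ∀ n ≤ G.dist u v, ∃ z, G.dist u z + G.dist z v = G.dist u v ∧ G.dist z v = n := by
    intro n
    induction n with
    | zero => intro _; exact ⟨v, by simp, by simp⟩
    | succ n ih =>
      intro hn
      obtain ⟨z, hz, hzn⟩ := ih (by omega)
      have hne : z ≠ u := by rintro rfl; omega
      obtain ⟨w, hw, hwd⟩ := exists_step hT hne
      have h3 := hT.connected.dist_triangle (u := u) (v := w) (w := v)
      rw [G.dist_comm (u := w) (v := u), G.dist_comm (u := z) (v := u)] at hwd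
      rcases adj_dist hT hw v with h | h
      · exact ⟨w, by omega, by omega⟩
      · omega
  have hP : PIso G P := by
    constructor
    · rintro ⟨z, z'⟩ ⟨h1, h2, h3⟩ ⟨y, y'⟩ ⟨h4, h5, h6⟩
      simp only at *
      rcases le_total (G.dist u z) (G.dist u y) with h | h
      · have a := hgeo z y h1 h4 h
        have b := hgeo y' z' h5 h2 (by omega)
        rw [G.dist_comm (u := y')] at b
        omega
      · have a := hgeo y z h4 h1 h
        have b := hgeo z' y' h2 h5 (by omega)
        rw [G.dist_comm (u := y)] at a
        omega
    · rintro ⟨z, z'⟩ ⟨h1, h2, h3⟩ ⟨y, y'⟩ ⟨h4, h5, h6⟩ t ht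
      simp only at *
      have hgt : G.dist u t + G.dist t v = G.dist u v := by
        have t1 := hT.connected.dist_triangle (u := u) (v := z) (w := t)
        have t2 := hT.connected.dist_triangle (u := u) (v := y) (w := t)
        have t3 := hT.connected.dist_triangle (u := t) (v := z) (w := v)
        have t4 := hT.connected.dist_triangle (u := t) (v := y) (w := v)
        have t5 := hT.connected.dist_triangle (u := u) (v := t) (w := v)
        rw [G.dist_comm (u := y) (v := t)] at t2
        rw [G.dist_comm (u := t) (v := z)] at t3
        rcases le_total (G.dist u z) (G.dist u y) with h | h
        · have a := hgeo z y h1 h4 h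
          omega
        · have a := hgeo y z h4 h1 h
          rw [G.dist_comm (u := y)] at a
          omega
      obtain ⟨t', ht', htn⟩ := hex (G.dist u t) (by omega)
      exact ⟨t', hgt, ht', htn.symm⟩
  have hu : (u, v) ∈ P := ⟨by simp, by simp, by simp⟩
  have hv : (v, u) ∈ P := ⟨by simp, by simp, by simp⟩
  obtain ⟨φ, hφ⟩ := hP.exists_iso hT hreg ⟨_, hu⟩
  exact ⟨φ, hφ _ hu, hφ _ hv⟩

lemma iso_dist (hT : G.IsTree) (φ : G ≃g G) (u v : V) : G.dist (φ u) (φ v) = G.dist u v := by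
  have key : ∀ (ψ : G ≃g G) (a b : V), G.dist (ψ a) (ψ b) ≤ G.dist a b := by
    intro ψ a b
    obtain ⟨p, hp⟩ := hT.connected.exists_walk_length_eq_dist a b
    have := SimpleGraph.dist_le (p.map ψ.toHom)
    rw [SimpleGraph.Walk.length_map, hp] at this
    exact this
  apply le_antisymm (key φ u v)
  have := key φ.symm (φ u) (φ v)
  simpa using this

end T4


namespace T4
variable {V : Type} {G : SimpleGraph V}

structure Tree4 (G : SimpleGraph V) : Prop where
  tree : G.IsTree
  reg : ∀ v : V, (G.neighborSet v).ncard = 4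

open Classical in
noncomputable def nb (G : SimpleGraph V) (v : V) : Finset V :=
  if h : (G.neighborSet v).Finite then h.toFinset else ∅

open Classical in
noncomputable def bal (G : SimpleGraph V) (v : V) (K : ℕ) : Finset V :=
  if h : {u | G.dist v u ≤ K}.Finite then h.toFinset else ∅

lemma Tree4.fin (h : Tree4 G) (v : V) : (G.neighborSet v).Finite :=
  Set.finite_of_ncard_pos (by rw [h.reg v]; norm_num)

lemma Tree4.mem_nb (h : Tree4 G) {v w : V} : w ∈ nb G v ↔ G.Adj v w := by
  simp [nb, h.fin v]

lemma Tree4.card_nb (h : Tree4 G) (v : V) : (nb G v).card = 4 := by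
  rw [← h.reg v, ← Set.ncard_coe_finset]
  congr 1
  ext w
  simp [h.mem_nb]

lemma Tree4.fin_ball (h : Tree4 G) (v : V) (K : ℕ) : {u | G.dist v u ≤ K}.Finite := by
  induction K with
  | zero =>
    refine (Set.finite_singleton v).subset ?_
    intro u hu
    have : G.dist v u = 0 := by simpa using hu
    exact ((h.tree.connected.dist_eq_zero_iff).1 this).symm
  | succ K ih =>
    refine (ih.union (ih.biUnion (fun w _ => h.fin w))).subset ?_
    intro u hu
    have hu' : G.dist v u ≤ K + 1 := hu
    by_cases hk : G.dist v u ≤ K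
    · exact Or.inl hk
    · right
      have hne : u ≠ v := by rintro rfl; simp at hk
      obtain ⟨w, hw, hwd⟩ := exists_step h.tree hne
      rw [G.dist_comm (u := w), G.dist_comm (u := u)] at hwd
      simp only [Set.mem_iUnion]
      exact ⟨w, show G.dist v w ≤ K by omega, hw.symm⟩

lemma Tree4.mem_bal (h : Tree4 G) {v u : V} {K : ℕ} : u ∈ bal G v K ↔ G.dist v u ≤ K := by
  simp [bal, h.fin_ball v K]

noncomputable def mdeg {q : ℕ} (G : SimpleGraph V) (c : V → Fin q) (v : V) : ℕ :=
  ((nb G v).filter (fun u => c u = c v)).card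

noncomputable def en {q : ℕ} (G : SimpleGraph V) (c : V → Fin q) (W : Finset V) : ℕ :=
  ∑ a ∈ W, mdeg G c a

variable {q : ℕ}

open Classical in
lemma en_update (h : Tree4 G) (d : V → Fin q) (v : V) (k : Fin q) (W : Finset V)
    (hv : v ∈ W) (hW : nb G v ⊆ W) :
    en G (Function.update d v k) W + 2 * mdeg G d v =
      en G d W + 2 * mdeg G (Function.update d v k) v := by
  set d' := Function.update d v k with hd'
  have hvn : v ∉ nb G v := by simp [h.mem_nb]
  have hne : ∀ a, a ≠ v → d' a = d a := fun a ha => by simp [hd', ha]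
  have hdv : d' v = k := by simp [hd']
  have hsplit : ∀ f : V → ℕ, ∑ a ∈ W, f a = f v + ∑ a ∈ nb G v, f a +
      ∑ a ∈ W \ insert v (nb G v), f a := by
    intro f
    rw [← Finset.sum_sdiff (Finset.insert_subset hv hW), Finset.sum_insert hvn]
    ring
  have h1 : ∑ a ∈ W \ insert v (nb G v), mdeg G d' a = ∑ a ∈ W \ insert v (nb G v), mdeg G d a := by
    apply Finset.sum_congr rfl
    intro a ha
    simp only [Finset.mem_sdiff, Finset.mem_insert, not_or] at ha
    unfold mdeg
    congr 1
    apply Finset.filter_congr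
    intro b hb
    have hbv : b ≠ v := by
      rintro rfl
      exact ha.2.2 (h.mem_nb.2 (h.mem_nb.1 hb).symm)
    rw [hne b hbv, hne a ha.2.1]
  have h2 : ∀ a ∈ nb G v, mdeg G d' a + (if d a = d v then 1 else 0) =
      mdeg G d a + (if d' a = d' v then 1 else 0) := by
    intro a ha
    have hav : a ≠ v := by rintro rfl; exact hvn ha
    have hva : v ∈ nb G a := h.mem_nb.2 (h.mem_nb.1 ha).symm
    unfold mdeg
    rw [← Finset.insert_erase hva, Finset.filter_insert, Finset.filter_insert]
    have : ((nb G a).erase v).filter (fun u => d' u = d' a) =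
        ((nb G a).erase v).filter (fun u => d u = d a) := by
      apply Finset.filter_congr
      intro b hb
      rw [hne b (Finset.ne_of_mem_erase hb), hne a hav]
    rw [this]
    simp only [eq_comm (a := d a) (b := d v), eq_comm (a := d' a) (b := d' v)]
    split_ifs <;> simp <;> omega
  have h3 := Finset.sum_congr rfl h2
  rw [Finset.sum_add_distrib, Finset.sum_add_distrib] at h3
  simp only [← Finset.card_filter] at h3
  unfold en
  rw [hsplit, hsplit, h1]
  change _ + mdeg G d v = _ + mdeg G d' v at h3
  omega

def Aug (G : SimpleGraph V) (K K' : ℕ) (c : V → Fin q) (v : V) : Prop :=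
  ∃ d : V → Fin q, (∀ u, K < G.dist v u → d u = c u) ∧
    ((bal G v K).filter (fun u => d u ≠ c u)).card ≤ K' ∧
    en G d (bal G v (K + 1)) < en G c (bal G v (K + 1))

def R (G : SimpleGraph V) (c : V → Fin q) : ℕ → V → V → Prop
  | 0, u, v => G.Adj u v ∧ c u = c v
  | n + 1, v, w => ∃ u, R G c n u v ∧ G.Adj v w ∧ w ≠ u ∧ c w ≠ c v ∧
      ∀ w', G.Adj v w' → w' ≠ u → c w' = c w → w' = w

lemma R_adj {c : V → Fin q} {n : ℕ} {u v : V} (h : R G c n u v) : G.Adj u v := by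
  cases n with
  | zero => exact h.1
  | succ n => obtain ⟨_, _, h, _⟩ := h; exact h

lemma dist_adj {u v : V} (h : G.Adj u v) : G.dist u v = 1 := SimpleGraph.dist_eq_one_iff_adj.2 h

lemma side_excl (h : Tree4 G) {u w v z : V} (hu : G.Adj u v) (hw : G.Adj v w) (hne : w ≠ u)
    (hz : G.dist z u < G.dist z v) : G.dist z v < G.dist z w := by
  rcases adj_dist h.tree hw z with h1 | h1
  · rw [G.dist_comm (u := w), G.dist_comm (u := v)] at h1; omega
  · rcases adj_dist h.tree hu.symm z with h2 | h2
    · rw [G.dist_comm (u := u), G.dist_comm (u := v)] at h2; omega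
    · exact absurd (step_unique h.tree hw hu.symm h1 h2) hne

lemma not_side (h : Tree4 G) {u v y : V} (hu : G.Adj u v) (hy : G.Adj v y) (hne : y ≠ u) :
    ¬ G.dist y u < G.dist y v := by
  have h0 := dist_adj hy.symm
  have : G.dist y u ≠ 0 := fun hh => hne ((h.tree.connected.dist_eq_zero_iff).1 hh)
  omega

lemma R_congr (h : Tree4 G) {c b : V → Fin q} : ∀ {n : ℕ} {u v : V}, R G c n u v →
    (∀ z, z = v ∨ G.dist z u < G.dist z v → b z = c z) → R G b n u v := by
  intro n
  induction n with
  | zero =>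
    intro u v hR hb
    refine ⟨hR.1, ?_⟩
    rw [hb u (Or.inr (by simp [dist_adj hR.1])), hb v (Or.inl rfl)]
    exact hR.2
  | succ n ih =>
    rintro v w ⟨u, hu, hvw, hwu, hc, hun⟩ hb
    have huv := R_adj hu
    have hbv : b v = c v := hb v (Or.inr (by simp [dist_adj hvw]))
    have hbn : ∀ w', G.Adj v w' → b w' = c w' := by
      intro w' hw'
      by_cases hww : w' = w
      · exact hb _ (Or.inl hww)
      · apply hb; right
        have h0 := dist_adj hw'.symm
        rcases adj_dist h.tree hvw w' with h1 | h1
        · rw [G.dist_comm (u := w), G.dist_comm (u := v)] at h1; omega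
        · rw [G.dist_comm (u := w), G.dist_comm (u := v)] at h1
          exact absurd ((h.tree.connected.dist_eq_zero_iff).1 (by omega)) hww
    refine ⟨u, ih hu ?_, hvw, hwu, ?_, ?_⟩
    · rintro z (rfl | hz)
      · exact hbv
      · exact hb z (Or.inr (side_excl h huv hvw hwu hz))
    · rw [hbn w hvw, hbv]; exact hc
    · intro w' hw' hne he
      rw [hbn w hvw, hbn w' hw'] at he
      exact hun w' hw' hne he

open Classical in
lemma shift (h : Tree4 G) {c : V → Fin q} : ∀ {n : ℕ} {u v : V}, R G c n u v →
    ∃ d : V → Fin q, (∀ z, ¬ (G.dist z u < G.dist z v) → d z = c z) ∧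
      (∀ z, n < G.dist v z → d z = c z) ∧
      (∀ W : Finset V, (W.filter (fun z => d z ≠ c z)).card ≤ n) ∧
      d u = c v ∧
      (∀ W : Finset V, (∀ z, G.dist v z ≤ n + 1 → z ∈ W) → en G d W ≤ en G c W) := by
  intro n
  induction n with
  | zero =>
    intro u v hR
    exact ⟨c, fun _ _ => rfl, fun _ _ => rfl, by simp, hR.2, fun _ _ => le_rfl⟩
  | succ n ih =>
    rintro v w ⟨u, hu, hvw, hwu, hc, hun⟩
    obtain ⟨d, d1, d2, d3, d4, d5⟩ := ih hu
    have huv := R_adj hu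
    have hdv : d v = c v := d1 v (by simp)
    refine ⟨Function.update d v (c w), ?_, ?_, ?_, ?_, ?_⟩
    · intro z hz
      have hzv : z ≠ v := by
        rintro rfl
        simp [dist_adj hvw] at hz
      rw [Function.update_of_ne hzv]
      exact d1 z (fun hh => hz (side_excl h huv hvw hwu hh))
    · intro z hz
      have h1 := dist_adj hvw.symm
      have hzv : z ≠ v := by rintro rfl; omega
      rw [Function.update_of_ne hzv]
      apply d2
      have := h.tree.connected.dist_triangle (u := w) (v := v) (w := z)
      omega
    · intro W
      refine le_trans (Finset.card_le_card (t := insert v (W.filter (fun z => d z ≠ c z))) ?_)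
        (le_trans (Finset.card_insert_le _ _) (by have := d3 W; omega))
      intro z hz
      simp only [Finset.mem_filter, Finset.mem_insert] at hz ⊢
      by_cases hzv : z = v
      · exact Or.inl hzv
      · rw [Function.update_of_ne hzv] at hz
        exact Or.inr hz
    · simp
    · intro W hW
      have h1 := dist_adj hvw.symm
      have hWv : ∀ z, G.dist v z ≤ n + 1 → z ∈ W := by
        intro z hz
        apply hW
        have := h.tree.connected.dist_triangle (u := w) (v := v) (w := z)
        omega
      have e1 := d5 W hWv
      have e2 := en_update h d v (c w) W (hWv v (by simp)) (by
        intro y hy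
        apply hWv
        rw [dist_adj (h.mem_nb.1 hy)]; omega)
      have e3 : 1 ≤ mdeg G d v := by
        apply Finset.card_pos.2
        refine ⟨u, ?_⟩
        simp only [Finset.mem_filter]
        exact ⟨h.mem_nb.2 huv.symm, by rw [d4, hdv]⟩
      have e4 : mdeg G (Function.update d v (c w)) v ≤ 1 := by
        refine le_trans (Finset.card_le_card (t := {w}) ?_) (by simp)
        intro y hy
        simp only [Finset.mem_filter, Function.update_self, h.mem_nb] at hy
        obtain ⟨hy1, hy2⟩ := hy
        rw [Function.update_of_ne hy1.ne'] at hy2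
        have hyu : y ≠ u := by
          rintro rfl
          rw [d4] at hy2
          exact hc hy2.symm
        rw [d1 y (not_side h huv hy1 hyu)] at hy2
        simp [hun y hy1 hyu hy2]
      omega

lemma changed_update [DecidableEq V] {c d : V → Fin q} {n : ℕ} (v : V) (k : Fin q)
    (hd : ∀ W : Finset V, (W.filter (fun z => d z ≠ c z)).card ≤ n) (W : Finset V) :
    (W.filter (fun z => Function.update d v k z ≠ c z)).card ≤ n + 1 := by
  refine le_trans (Finset.card_le_card (t := insert v (W.filter (fun z => d z ≠ c z))) ?_)
    (le_trans (Finset.card_insert_le _ _) (by have := hd W; omega))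
  intro z hz
  simp only [Finset.mem_filter, Finset.mem_insert] at hz ⊢
  by_cases hzv : z = v
  · exact Or.inl hzv
  · rw [Function.update_of_ne hzv] at hz
    exact Or.inr hz

open Classical in
lemma gain1 (h : Tree4 G) {c : V → Fin q} {K K' n : ℕ} {u v : V} (hR : R G c n u v)
    (hK : n ≤ K) (hK' : n + 1 ≤ K') (hA : ¬ Aug G K K' c v) (k : Fin q) (hk : k ≠ c v) :
    1 + (((nb G v).erase u).filter (fun w => c w = c v)).card ≤
      (((nb G v).erase u).filter (fun w => c w = k)).card := by
  by_contra hlt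
  push Not at hlt
  apply hA
  obtain ⟨d, d1, d2, d3, d4, d5⟩ := shift h hR
  have huv := R_adj hR
  have hdv : d v = c v := d1 v (by simp)
  have hun : u ∈ nb G v := h.mem_nb.2 huv.symm
  have hdn : ∀ y ∈ (nb G v).erase u, d y = c y := by
    intro y hy
    rw [Finset.mem_erase, h.mem_nb] at hy
    exact d1 y (not_side h huv hy.2 hy.1)
  have hmem : ∀ z, G.dist v z ≤ K + 1 → z ∈ bal G v (K + 1) := fun z hz => h.mem_bal.2 hz
  refine ⟨Function.update d v k, ?_, ?_, ?_⟩
  · intro z hz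
    have hzv : z ≠ v := by rintro rfl; simp at hz
    rw [Function.update_of_ne hzv]
    exact d2 z (by omega)
  · exact le_trans (changed_update v k d3 _) hK'
  · have e1 := d5 (bal G v (K + 1)) (fun z hz => hmem z (by omega))
    have e2 := en_update h d v k (bal G v (K + 1)) (hmem v (by simp)) (by
      intro y hy
      apply hmem
      rw [dist_adj (h.mem_nb.1 hy)]; omega)
    have e3 : mdeg G d v = 1 + (((nb G v).erase u).filter (fun w => c w = c v)).card := by
      unfold mdeg
      rw [← Finset.insert_erase hun, Finset.filter_insert, if_pos (by rw [d4, hdv]),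
        Finset.card_insert_of_notMem (by simp), add_comm, Finset.insert_erase hun]
      congr 2
      apply Finset.filter_congr
      intro y hy
      rw [hdn y hy, hdv]
    have e4 : mdeg G (Function.update d v k) v =
        (((nb G v).erase u).filter (fun w => c w = k)).card := by
      unfold mdeg
      rw [← Finset.insert_erase hun, Finset.filter_insert, if_neg, Finset.insert_erase hun]
      · congr 1
        apply Finset.filter_congr
        intro y hy
        have hyv : y ≠ v := (h.mem_nb.1 (Finset.mem_of_mem_erase hy)).ne'
        rw [Function.update_of_ne hyv, hdn y hy, Function.update_self]
      · rw [Function.update_of_ne huv.ne, d4, Function.update_self]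
        exact hk.symm
    omega

open Classical in
lemma gain2 (h : Tree4 G) (hq : 3 ≤ q) {c : V → Fin q} {K K' n n' : ℕ} {u u' v : V}
    (hR : R G c n u v) (hR' : R G c n' u' v) (hne : u ≠ u')
    (hK : n ≤ K) (hKn : n' ≤ K) (hK' : n + n' + 1 ≤ K') : Aug G K K' c v := by
  obtain ⟨d, d1, d2, d3, d4, d5⟩ := shift h hR
  have huv := R_adj hR
  have huv' := R_adj hR'
  have hdv : d v = c v := d1 v (by simp)
  have hR2 : R G d n' u' v := by
    apply R_congr h hR'
    rintro z (rfl | hz)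
    · exact hdv
    · apply d1
      have := side_excl h huv' huv.symm hne hz
      omega
  obtain ⟨e, e1, e2, e3, e4, e5⟩ := shift h hR2
  have hev : e v = c v := by rw [e1 v (by simp), hdv]
  have heu : e u = c v := by
    rw [e1 u (not_side h huv' huv.symm hne), d4]
  have heu' : e u' = c v := by rw [e4, hdv]
  have hun : u ∈ nb G v := h.mem_nb.2 huv.symm
  have hun' : u' ∈ nb G v := h.mem_nb.2 huv'.symm
  have hmem : ∀ z, G.dist v z ≤ K + 1 → z ∈ bal G v (K + 1) := fun z hz => h.mem_bal.2 hz
  -- choose a colour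
  obtain ⟨k, hk, hkc⟩ : ∃ k, k ≠ c v ∧ ((nb G v).filter (fun y => e y = k)).card ≤ 1 := by
    obtain ⟨k1, k2, h12, h1, h2⟩ : ∃ k1 k2 : Fin q, k1 ≠ k2 ∧ k1 ≠ c v ∧ k2 ≠ c v := by
      have : 2 ≤ (Finset.univ.erase (c v)).card := by
        rw [Finset.card_erase_of_mem (Finset.mem_univ _), Finset.card_univ, Fintype.card_fin]; omega
      obtain ⟨k1, hk1, k2, hk2, hh⟩ := Finset.one_lt_card.1 this
      exact ⟨k1, k2, hh, Finset.ne_of_mem_erase hk1, Finset.ne_of_mem_erase hk2⟩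
    by_contra hcon
    push Not at hcon
    have a1 := hcon k1 h1
    have a2 := hcon k2 h2
    have hsub : ({u, u'} : Finset V) ∪ ((nb G v).filter (fun y => e y = k1) ∪
        (nb G v).filter (fun y => e y = k2)) ⊆ nb G v := by
      apply Finset.union_subset
      · intro y hy
        simp only [Finset.mem_insert, Finset.mem_singleton] at hy
        rcases hy with rfl | rfl <;> assumption
      · exact Finset.union_subset (Finset.filter_subset _ _) (Finset.filter_subset _ _)
    have hc := Finset.card_le_card hsub
    rw [Finset.card_union_of_disjoint, Finset.card_union_of_disjoint, Finset.card_pair hne,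
      h.card_nb] at hc
    · omega
    · rw [Finset.disjoint_left]
      intro y hy hy'
      simp only [Finset.mem_filter] at hy hy'
      exact h12 (hy.2.symm.trans hy'.2)
    · rw [Finset.disjoint_left]
      intro y hy hy'
      simp only [Finset.mem_insert, Finset.mem_singleton] at hy
      simp only [Finset.mem_filter, Finset.mem_union] at hy'
      rcases hy with rfl | rfl
      · rcases hy' with hy' | hy'
        · exact h1 (hy'.2.symm.trans heu)
        · exact h2 (hy'.2.symm.trans heu)
      · rcases hy' with hy' | hy'
        · exact h1 (hy'.2.symm.trans heu')
        · exact h2 (hy'.2.symm.trans heu')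
  have e3' : ∀ W : Finset V, (W.filter (fun z => e z ≠ c z)).card ≤ n + n' := by
    intro W
    refine le_trans (Finset.card_le_card (t := W.filter (fun z => d z ≠ c z) ∪
      W.filter (fun z => e z ≠ d z)) ?_) (le_trans (Finset.card_union_le _ _)
        (add_le_add (d3 W) (e3 W)))
    intro z hz
    simp only [Finset.mem_filter, Finset.mem_union] at hz ⊢
    by_cases hh : d z = c z
    · right; exact ⟨hz.1, by rw [hh]; exact hz.2⟩
    · exact Or.inl ⟨hz.1, hh⟩
  refine ⟨Function.update e v k, ?_, ?_, ?_⟩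
  · intro z hz
    have hzv : z ≠ v := by rintro rfl; simp at hz
    rw [Function.update_of_ne hzv, e2 z (by omega), d2 z (by omega)]
  · exact le_trans (changed_update v k e3' _) hK'
  · have f1 := d5 (bal G v (K + 1)) (fun z hz => hmem z (by omega))
    have f1' := e5 (bal G v (K + 1)) (fun z hz => hmem z (by omega))
    have f2 := en_update h e v k (bal G v (K + 1)) (hmem v (by simp)) (by
      intro y hy
      apply hmem
      rw [dist_adj (h.mem_nb.1 hy)]; omega)
    have f3 : 2 ≤ mdeg G e v := by
      unfold mdeg
      rw [← Finset.card_pair hne]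
      apply Finset.card_le_card
      intro y hy
      simp only [Finset.mem_insert, Finset.mem_singleton] at hy
      simp only [Finset.mem_filter]
      rcases hy with rfl | rfl
      · exact ⟨hun, by rw [heu, hev]⟩
      · exact ⟨hun', by rw [heu', hev]⟩
    have f4 : mdeg G (Function.update e v k) v ≤ 1 := by
      refine le_trans (le_of_eq ?_) hkc
      unfold mdeg
      congr 1
      apply Finset.filter_congr
      intro y hy
      have hyv : y ≠ v := (h.mem_nb.1 hy).ne'
      rw [Function.update_of_ne hyv, Function.update_self]
    omega

lemma in_unique (h : Tree4 G) (hq : 3 ≤ q) {c : V → Fin q} {N : ℕ}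
    (hA : ∀ v, ¬ Aug G N (2 * N + 1) c v) : ∀ {n n' : ℕ} {u u' v : V},
    R G c n u v → R G c n' u' v → n ≤ N → n' ≤ N → u = u' ∧ n = n' := by
  intro n
  induction n with
  | zero =>
    intro n' u u' v hR hR' hn hn'
    have huu : u = u' := by
      by_contra hne
      exact hA v (gain2 h hq hR hR' hne hn hn' (by omega))
    refine ⟨huu, ?_⟩
    cases n' with
    | zero => rfl
    | succ m =>
      obtain ⟨t, _, _, _, hc, _⟩ := hR'
      exact absurd (huu ▸ hR.2.symm) hc
  | succ n ih =>
    intro n' u u' v hR hR' hn hn'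
    have huu : u = u' := by
      by_contra hne
      exact hA v (gain2 h hq hR hR' hne hn hn' (by omega))
    refine ⟨huu, ?_⟩
    subst huu
    cases n' with
    | zero =>
      obtain ⟨t, _, _, _, hc, _⟩ := hR
      exact absurd hR'.2.symm hc
    | succ m =>
      obtain ⟨t, ht, _⟩ := hR
      obtain ⟨t', ht', _⟩ := hR'
      rw [(ih ht ht' (by omega) (by omega)).2]

open Classical in
lemma triple (h : Tree4 G) {c : V → Fin q} {K K' n : ℕ} {u v : V} (hR : R G c n u v)
    (hK : n ≤ K) (hK' : n + 1 ≤ K') (hA : ¬ Aug G K K' c v) :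
    ∃ x y z, x ≠ y ∧ x ≠ z ∧ y ≠ z ∧ (nb G v).erase u = {x, y, z} ∧
      (∀ k, k ≠ c v → 1 + ((if c x = c v then 1 else 0) + ((if c y = c v then 1 else 0) +
        (if c z = c v then 1 else 0))) ≤ ((if c x = k then 1 else 0) +
        ((if c y = k then 1 else 0) + (if c z = k then 1 else 0)) : ℕ)) ∧
      (∀ w w1 w2, ({x, y, z} : Finset V) = {w, w1, w2} → (c w ≠ c v ∧ c w1 ≠ c w ∧ c w2 ≠ c w) →
        R G c (n + 1) v w) := by
  have huv := R_adj hR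
  have hun : u ∈ nb G v := h.mem_nb.2 huv.symm
  have hcard : ((nb G v).erase u).card = 3 := by
    rw [Finset.card_erase_of_mem hun, h.card_nb]
  obtain ⟨x, y, z, hxy, hxz, hyz, he⟩ := Finset.card_eq_three.1 hcard
  refine ⟨x, y, z, hxy, hxz, hyz, he, ?_, ?_⟩
  · intro k hk
    have := gain1 h hR hK hK' hA k hk
    rw [he, Finset.card_filter, Finset.card_filter] at this
    rw [Finset.sum_insert (by simp [hxy, hxz]), Finset.sum_insert (by simp [hyz]),
      Finset.sum_singleton, Finset.sum_insert (by simp [hxy, hxz]),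
      Finset.sum_insert (by simp [hyz]), Finset.sum_singleton] at this
    exact this
  · intro w w1 w2 hw ⟨hc1, hc2, hc3⟩
    have hmem : ∀ t, (G.Adj v t ∧ t ≠ u) ↔ t = w ∨ t = w1 ∨ t = w2 := by
      intro t
      have : t ∈ (nb G v).erase u ↔ t ∈ ({w, w1, w2} : Finset V) := by rw [he, hw]
      rw [Finset.mem_erase, h.mem_nb] at this
      simp only [Finset.mem_insert, Finset.mem_singleton] at this
      tauto
    obtain ⟨a1, a2⟩ := (hmem w).2 (Or.inl rfl)
    refine ⟨u, hR, a1, a2, hc1, ?_⟩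
    intro w' hw' hne hcc
    rcases (hmem w').1 ⟨hw', hne⟩ with rfl | rfl | rfl
    · rfl
    · exact absurd hcc hc2
    · exact absurd hcc hc3

lemma dec3 : ∀ v x y z : Fin 3, (∀ k, k ≠ v → 1 + ((if x = v then 1 else 0) +
    ((if y = v then 1 else 0) + (if z = v then 1 else 0))) ≤ ((if x = k then 1 else 0) +
        ((if y = k then 1 else 0) + (if z = k then 1 else 0)) : ℕ)) →
    (x ≠ v ∧ y ≠ x ∧ z ≠ x) ∨ (y ≠ v ∧ x ≠ y ∧ z ≠ y) ∨ (z ≠ v ∧ x ≠ z ∧ y ≠ z) := by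
  decide

set_option maxRecDepth 4000 in
lemma dec4 : ∀ v x y z : Fin 4, (∀ k, k ≠ v → 1 + ((if x = v then 1 else 0) +
    ((if y = v then 1 else 0) + (if z = v then 1 else 0))) ≤ ((if x = k then 1 else 0) +
        ((if y = k then 1 else 0) + (if z = k then 1 else 0)) : ℕ)) →
    (x ≠ v ∧ y ≠ x ∧ z ≠ x) ∧ (y ≠ v ∧ x ≠ y ∧ z ≠ y) ∧ (z ≠ v ∧ x ≠ z ∧ y ≠ z) := by
  decide

open Classical in
lemma in_card (h : Tree4 G) (hq : 3 ≤ q) {c : V → Fin q} {N n : ℕ} (hn : n ≤ N)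
    (hA : ∀ v, ¬ Aug G N (2 * N + 1) c v) (v : V) :
    ((nb G v).filter (fun u => R G c n u v)).card ≤ 1 := by
  rw [Finset.card_le_one]
  intro a ha b hb
  simp only [Finset.mem_filter] at ha hb
  exact (in_unique h hq hA ha.2 hb.2 hn hn).1

open Classical in
lemma out3 (h : Tree4 G) {c : V → Fin 3} {N n : ℕ} (hn : n ≤ N)
    (hA : ∀ v, ¬ Aug G N (2 * N + 1) c v) (v : V) :
    1 * ((nb G v).filter (fun u => R G c n u v)).card ≤
      ((nb G v).filter (fun w => R G c (n + 1) v w)).card := by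
  by_cases hex : ∃ u, R G c n u v
  · obtain ⟨u, hu⟩ := hex
    rw [one_mul]
    refine (in_card h le_rfl hn hA v).trans ?_
    obtain ⟨x, y, z, hxy, hxz, hyz, he, hk, hw⟩ := triple h hu hn (by omega) (hA v)
    have hR : ∃ w, R G c (n + 1) v w := by
      rcases dec3 _ _ _ _ hk with hh | hh | hh
      · exact ⟨x, hw x y z rfl hh⟩
      · exact ⟨y, hw y x z (by ext; simp; tauto) hh⟩
      · exact ⟨z, hw z x y (by ext; simp; tauto) hh⟩
    obtain ⟨w, hw⟩ := hR
    exact Finset.card_pos.2 ⟨w, Finset.mem_filter.2 ⟨h.mem_nb.2 (R_adj hw), hw⟩⟩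
  · push Not at hex
    simp [hex]

open Classical in
lemma out4 (h : Tree4 G) {c : V → Fin 4} {N n : ℕ} (hn : n ≤ N)
    (hA : ∀ v, ¬ Aug G N (2 * N + 1) c v) (v : V) :
    3 * ((nb G v).filter (fun u => R G c n u v)).card ≤
      ((nb G v).filter (fun w => R G c (n + 1) v w)).card := by
  by_cases hex : ∃ u, R G c n u v
  · obtain ⟨u, hu⟩ := hex
    refine (Nat.mul_le_mul_left 3 (in_card h (by norm_num) hn hA v)).trans ?_
    obtain ⟨x, y, z, hxy, hxz, hyz, he, hk, hw⟩ := triple h hu hn (by omega) (hA v)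
    obtain ⟨h1, h2, h3⟩ := dec4 _ _ _ _ hk
    have r1 := hw x y z rfl h1
    have r2 := hw y x z (by ext; simp; tauto) h2
    have r3 := hw z x y (by ext; simp; tauto) h3
    have : ({x, y, z} : Finset V).card = 3 := Finset.card_eq_three.2 ⟨x, y, z, hxy, hxz, hyz, rfl⟩
    rw [mul_one, ← this]
    apply Finset.card_le_card
    intro t ht
    simp only [Finset.mem_insert, Finset.mem_singleton] at ht
    rw [Finset.mem_filter, h.mem_nb]
    rcases ht with rfl | rfl | rfl
    · exact ⟨R_adj r1, r1⟩
    · exact ⟨R_adj r2, r2⟩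
    · exact ⟨R_adj r3, r3⟩
  · push Not at hex
    simp [hex]

end T4


namespace T4
variable {V : Type} {G : SimpleGraph V}

structure Good (G : SimpleGraph V) (μ : Measure (V → ℝ)) : Prop extends Tree4 G where
  inv : ∀ φ : G ≃g G, MeasurePreserving (fun (x : V → ℝ) (u : V) => x (φ.symm u)) μ μ
  inj : ∀ᵐ x ∂μ, Function.Injective x

lemma good_of [Countable V] (h : Tree4 G) (μ : Measure (V → ℝ)) [IsProbabilityMeasure μ]
    (hμ : ∀ s : Finset V,
      Measure.map (fun (x : V → ℝ) (v : s) => x v) μ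
        = Measure.pi (fun _ : s => volume.restrict (Set.Icc (0:ℝ) 1))) : Good G μ := by
  have hν : IsProbabilityMeasure (volume.restrict (Set.Icc (0:ℝ) 1)) := ⟨by simp⟩
  have hpi : μ = Measure.infinitePi (fun _ : V => volume.restrict (Set.Icc (0:ℝ) 1)) := by
    have h1 : IsProjectiveLimit μ
      (fun I : Finset V => Measure.pi (fun _ : I => volume.restrict (Set.Icc (0:ℝ) 1))) :=
      fun I => hμ I
    exact h1.unique (Measure.isProjectiveLimit_infinitePi _)
  refine ⟨h, ?_, ?_⟩
  · intro φ
    refine ⟨by fun_prop, ?_⟩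
    have := Measure.infinitePi_map_piCongrLeft
      (fun _ : V => volume.restrict (Set.Icc (0:ℝ) 1)) φ.toEquiv
    rw [← hpi] at this
    convert this using 2
    ext x u
    obtain ⟨w, rfl⟩ := φ.surjective u
    have := MeasurableEquiv.piCongrLeft_apply_apply (β := fun _ : V => ℝ) φ.toEquiv x w
    simp at this
    simp [this]
  · have h2 : ∀ u v : V, u ≠ v → ∀ᵐ x ∂μ, x u ≠ x v := by
      intro u v huv
      have hi := ProbabilityTheory.iIndepFun_infinitePi
        (P := fun _ : V => volume.restrict (Set.Icc (0:ℝ) 1)) (X := fun _ x => x)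
        (fun _ => measurable_id)
      rw [← hpi] at hi
      have hi2 := hi.indepFun huv
      rw [ProbabilityTheory.indepFun_iff_map_prod_eq_prod_map_map (measurable_pi_apply u).aemeasurable
        (measurable_pi_apply v).aemeasurable] at hi2
      have hm : ∀ u : V, Measure.map (fun x : V → ℝ => x u) μ = volume.restrict (Set.Icc (0:ℝ) 1) := by
        intro u
        rw [hpi]; exact Measure.infinitePi_map_eval _ u
      rw [hm, hm] at hi2
      have h3 : ∀ᵐ p ∂(volume.restrict (Set.Icc (0:ℝ) 1)).prod (volume.restrict (Set.Icc (0:ℝ) 1)),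
          p.1 ≠ p.2 := by
        rw [Measure.ae_prod_iff_ae_ae]
        · refine Filter.Eventually.of_forall fun x => ?_
          have := Measure.ae_ne (μ := volume.restrict (Set.Icc (0:ℝ) 1)) x
          filter_upwards [this] with y hy using hy.symm
        · exact (measurableSet_eq_fun measurable_fst measurable_snd).compl
      rw [← hi2] at h3
      exact ae_of_ae_map (f := fun x : V → ℝ => (x u, x v))
        ((measurable_pi_apply u).prodMk (measurable_pi_apply v)).aemeasurable h3
    have h4 : ∀ᵐ x ∂μ, ∀ u v : V, u ≠ v → x u ≠ x v := by
      rw [ae_all_iff]; intro u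
      rw [ae_all_iff]; intro v
      by_cases e : u = v
      · simp [e]
      · have := h2 u v e
        filter_upwards [this] with x hx _ using hx
    filter_upwards [h4] with x hx u v huv
    by_contra hne
    exact hx u v hne huv
end T4


namespace T4
variable {V : Type} {G : SimpleGraph V} {q : ℕ}
open scoped ENNReal

def sh (φ : G ≃g G) (x : V → ℝ) : V → ℝ := fun u => x (φ.symm u)

structure Fiid (G : SimpleGraph V) (f : (V → ℝ) → V → Fin q) : Prop where
  meas : Measurable f
  eqv : ∀ (φ : G ≃g G) x v, f (sh φ x) (φ v) = f x v

lemma Fiid.m {f : (V → ℝ) → V → Fin q} (h : Fiid G f) (v : V) : Measurable fun x => f x v :=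
  (measurable_pi_apply v).comp h.meas

lemma Good.swap_lint {μ : Measure (V → ℝ)} (h : Good G μ)
    (F : (V → ℝ) → V → V → ℝ≥0∞) (hm : ∀ u v, Measurable fun x => F x u v)
    (hF : ∀ (φ : G ≃g G) x u v, F (sh φ x) (φ u) (φ v) = F x u v) (u v : V) :
    ∫⁻ x, F x u v ∂μ = ∫⁻ x, F x v u ∂μ := by
  obtain ⟨φ, h1, h2⟩ := exists_swap h.tree h.reg u v
  rw [← (h.inv φ).lintegral_comp (hm u v)]
  refine lintegral_congr fun x => ?_
  have := hF φ x v u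
  rw [h1, h2] at this
  exact this

lemma Good.mtp [Countable V] {μ : Measure (V → ℝ)} (h : Good G μ)
    (F : (V → ℝ) → V → V → ℝ≥0∞) (hm : ∀ u v, Measurable fun x => F x u v)
    (hF : ∀ (φ : G ≃g G) x u v, F (sh φ x) (φ u) (φ v) = F x u v) (o : V) :
    ∫⁻ x, ∑' v, F x o v ∂μ = ∫⁻ x, ∑' v, F x v o ∂μ := by
  rw [lintegral_tsum fun v => (hm o v).aemeasurable, lintegral_tsum fun v => (hm v o).aemeasurable]
  exact tsum_congr fun v => h.swap_lint F hm hF o v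

lemma Good.hom {μ : Measure (V → ℝ)} (h : Good G μ)
    (F : (V → ℝ) → V → ℝ≥0∞) (hm : ∀ u, Measurable fun x => F x u)
    (hF : ∀ (φ : G ≃g G) x u, F (sh φ x) (φ u) = F x u) (u v : V) :
    ∫⁻ x, F x u ∂μ = ∫⁻ x, F x v ∂μ :=
  h.swap_lint (fun x u _ => F x u) (fun u _ => hm u) (fun φ x u _ => hF φ x u) u v

open Classical in
noncomputable def sel [NeZero q] (p : Fin q → Prop) : Fin q :=
  if h : ∃ k, p k then h.choose else 0

lemma sel_spec [NeZero q] {p : Fin q → Prop} {k : Fin q} (hk : p k) : p (sel p) := by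
  have h : ∃ k, p k := ⟨k, hk⟩
  rw [sel, dif_pos h]
  exact h.choose_spec

lemma limit [NeZero q] [Countable V] {μ : Measure (V → ℝ)}
    (c : ℕ → (V → ℝ) → V → Fin q) (hc : ∀ j, Fiid G (c j)) (S : ℝ≥0∞) (hS : S ≠ ∞)
    (hsum : ∀ v, ∑' j, μ {x | c (j+1) x v ≠ c j x v} ≤ S) :
    ∃ f : (V → ℝ) → V → Fin q, Fiid G f ∧ (∀ᵐ x ∂μ, ∀ v, ∀ᶠ j in Filter.atTop, c j x v = f x v) ∧
      ∀ v, μ {x | f x v ≠ c 0 x v} ≤ S := by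
  have key : ∀ᵐ x ∂μ, ∀ v, ∀ᶠ j in Filter.atTop,
      c j x v = sel (fun k => ∀ᶠ j in Filter.atTop, c j x v = k) := by
    rw [ae_all_iff]
    intro v
    have := ae_eventually_notMem (μ := μ) (s := fun j => {x | c (j+1) x v ≠ c j x v})
      (ne_top_of_le_ne_top hS (hsum v))
    filter_upwards [this] with x hx
    obtain ⟨N, hN⟩ := Filter.eventually_atTop.1 hx
    have h1 : ∀ j, N ≤ j → c j x v = c N x v := by
      intro j hj
      induction j, hj using Nat.le_induction with
      | base => rfl
      | succ j hj ih =>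
        have := hN j hj
        simp only [Set.mem_setOf_eq, not_not] at this
        rw [this, ih]
    exact sel_spec (p := fun k => ∀ᶠ j in Filter.atTop, c j x v = k)
      (Filter.eventually_atTop.2 ⟨N, h1⟩)
  refine ⟨fun x v => sel (fun k => ∀ᶠ j in Filter.atTop, c j x v = k), ⟨?_, ?_⟩, key, ?_⟩
  · rw [measurable_pi_iff]
    intro v
    have h1 : Measurable fun x => (fun k : Fin q => ∀ᶠ j in Filter.atTop, c j x v = k) := by
      rw [measurable_pi_iff]
      intro k
      simp only [Filter.eventually_atTop]
      refine Measurable.exists fun N => Measurable.forall fun j => Measurable.forall fun _ => ?_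
      exact measurableSet_setOf.1 (measurableSet_eq_fun ((hc j).m v) measurable_const)
    exact (measurable_of_countable (sel : (Fin q → Prop) → Fin q)).comp h1
  · intro φ x v
    simp only [(hc _).eqv]
  · intro v
    refine le_trans (le_trans (measure_mono_ae ?_) (measure_iUnion_le _)) (hsum v)
    filter_upwards [key] with x hx hne
    by_contra hcon
    have hcon : ∀ j, c (j+1) x v = c j x v := by
      intro j
      by_contra hj
      exact hcon (Set.mem_iUnion.2 ⟨j, hj⟩)
    have h0 : ∀ j, c j x v = c 0 x v := by
      intro j; induction j with
      | zero => rfl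
      | succ j ih => rw [hcon, ih]
    obtain ⟨j, hj⟩ := (hx v).exists
    exact hne (hj.symm.trans (h0 j))

lemma nb_iso (h : Tree4 G) (φ : G ≃g G) (v : V) : nb G (φ v) = (nb G v).map φ.toEquiv.toEmbedding := by
  ext w
  simp only [h.mem_nb, Finset.mem_map, Equiv.coe_toEmbedding]
  constructor
  · intro hw
    refine ⟨φ.symm w, ?_, by simp⟩
    rw [← φ.map_adj_iff]; simpa using hw
  · rintro ⟨u, hu, rfl⟩
    exact φ.map_adj_iff.2 hu

lemma bal_iso (h : Tree4 G) (φ : G ≃g G) (v : V) (K : ℕ) :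
    bal G (φ v) K = (bal G v K).map φ.toEquiv.toEmbedding := by
  ext w
  simp only [h.mem_bal, Finset.mem_map, Equiv.coe_toEmbedding]
  constructor
  · intro hw
    refine ⟨φ.symm w, ?_, by simp⟩
    rw [← iso_dist h.tree φ]; simpa using hw
  · rintro ⟨u, hu, rfl⟩
    exact (iso_dist h.tree φ v u).le.trans hu

lemma mdeg_iso (h : Tree4 G) (φ : G ≃g G) (c c' : V → Fin q) (hc : ∀ u, c' (φ u) = c u) (v : V) :
    mdeg G c' (φ v) = mdeg G c v := by
  simp only [mdeg, nb_iso h, Finset.card_filter, Finset.sum_map]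
  simp [hc]

lemma en_iso (h : Tree4 G) (φ : G ≃g G) (c c' : V → Fin q) (hc : ∀ u, c' (φ u) = c u) (v : V) (K : ℕ) :
    en G c' (bal G (φ v) K) = en G c (bal G v K) := by
  simp only [en, bal_iso h, Finset.sum_map]
  exact Finset.sum_congr rfl fun u _ => mdeg_iso h φ c c' hc u

lemma mdeg_meas {α : Type*} [MeasurableSpace α] (c : α → V → Fin q)
    (hc : ∀ v, Measurable fun x => c x v) (v : V) : Measurable fun x => mdeg G (c x) v := by
  simp only [mdeg, Finset.card_filter]
  refine Finset.measurable_sum _ fun u _ => ?_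
  exact Measurable.ite (measurableSet_eq_fun (hc u) (hc v)) measurable_const measurable_const

lemma en_meas {α : Type*} [MeasurableSpace α] (c : α → V → Fin q)
    (hc : ∀ v, Measurable fun x => c x v) (W : Finset V) : Measurable fun x => en G (c x) W :=
  Finset.measurable_sum _ fun u _ => mdeg_meas c hc u

noncomputable def E (G : SimpleGraph V) (μ : Measure (V → ℝ)) (c : (V → ℝ) → V → Fin q) (o : V) : ℝ≥0∞ :=
  ∫⁻ x, (mdeg G (c x) o : ℝ≥0∞) ∂μ

lemma E_hom {μ : Measure (V → ℝ)} (h : Good G μ) {c : (V → ℝ) → V → Fin q} (hc : Fiid G c) (u v : V) :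
    E G μ c u = E G μ c v :=
  h.hom (fun x o => (mdeg G (c x) o : ℝ≥0∞))
    (fun u => (measurable_of_countable (fun n : ℕ => (n : ℝ≥0∞))).comp (mdeg_meas c hc.m u))
    (fun φ x u => by rw [mdeg_iso h.toTree4 φ (c x) (c (sh φ x)) (hc.eqv φ x)]) u v

end T4


namespace T4
variable {V : Type} {G : SimpleGraph V} {q : ℕ}
open scoped ENNReal

open Classical in
noncomputable def cl (G : SimpleGraph V) (K : ℕ) (c d : V → Fin q) (v u : V) : Fin q :=
  if G.dist v u ≤ K then d u else c u

def Act (G : SimpleGraph V) (K K' : ℕ) (c d : V → Fin q) (B : V → Prop) (v : V) : Prop :=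
  B v ∧ ((bal G v K).filter (fun u => d u ≠ c u)).card ≤ K' ∧
    en G (cl G K c d v) (bal G v (K+1)) < en G c (bal G v (K+1))

open Classical in
noncomputable def next (G : SimpleGraph V) (K K' : ℕ) (c d : V → Fin q) (B : V → Prop) (u : V) : Fin q :=
  if ∃ v, Act G K K' c d B v ∧ G.dist v u ≤ K then d u else c u

def Sep (G : SimpleGraph V) (K : ℕ) (B : V → Prop) : Prop :=
  ∀ v w, B v → B w → G.dist v w ≤ 2 * K + 2 → v = w

lemma mdeg_congr (h : Tree4 G) {c c' : V → Fin q} {a : V} (h1 : c a = c' a)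
    (h2 : ∀ u, G.Adj a u → c u = c' u) : mdeg G c a = mdeg G c' a := by
  unfold mdeg
  congr 1
  refine Finset.filter_congr fun u hu => ?_
  rw [h1, h2 u (h.mem_nb.1 hu)]

lemma en_congr (h : Tree4 G) {c c' : V → Fin q} {v : V} {K : ℕ}
    (hc : ∀ u, G.dist v u ≤ K + 1 → c u = c' u) : en G c (bal G v K) = en G c' (bal G v K) := by
  refine Finset.sum_congr rfl fun a ha => ?_
  have ha' := h.mem_bal.1 ha
  refine mdeg_congr h (hc a (by omega)) fun u hu => hc u ?_
  have := h.tree.connected.dist_triangle (u := v) (v := a) (w := u)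
  rw [dist_adj hu] at this
  omega

lemma next_near (h : Tree4 G) {K K' : ℕ} {c d : V → Fin q} {B : V → Prop} (hB : Sep G K B) {v u : V}
    (hv : Act G K K' c d B v) (hu : G.dist v u ≤ K + 2) :
    next G K K' c d B u = cl G K c d v u := by
  unfold next cl
  by_cases hk : G.dist v u ≤ K
  · rw [if_pos hk, if_pos ⟨v, hv, hk⟩]
  · rw [if_neg hk, if_neg]
    rintro ⟨w, hw, hwu⟩
    have := h.tree.connected.dist_triangle (u := v) (v := u) (w := w)
    rw [G.dist_comm (u := u)] at this
    have e := hB v w hv.1 hw.1 (by omega)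
    subst e
    exact hk hwu

lemma next_en (h : Tree4 G) {K K' : ℕ} {c d : V → Fin q} {B : V → Prop} (hB : Sep G K B) {v : V}
    (hv : Act G K K' c d B v) :
    en G (next G K K' c d B) (bal G v (K+1)) + 1 ≤ en G c (bal G v (K+1)) := by
  rw [en_congr h (c' := cl G K c d v) fun u hu => next_near h hB hv hu]
  exact hv.2.2

lemma next_far (h : Tree4 G) {K K' : ℕ} {c d : V → Fin q} {B : V → Prop} {a : V}
    (ha : ¬ ∃ v, Act G K K' c d B v ∧ G.dist v a ≤ K + 1) :
    mdeg G (next G K K' c d B) a = mdeg G c a := by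
  push Not at ha
  refine mdeg_congr h ?_ ?_
  · unfold next
    rw [if_neg]
    rintro ⟨v, hv, hd⟩
    have := ha v hv
    omega
  · intro u hu
    unfold next
    rw [if_neg]
    rintro ⟨v, hv, hd⟩
    have := ha v hv
    have := h.tree.connected.dist_triangle (u := v) (v := u) (w := a)
    rw [dist_adj hu.symm] at this
    omega

lemma act_iso (h : Tree4 G) (φ : G ≃g G) {K K' : ℕ} {c d c' d' : V → Fin q} {B B' : V → Prop}
    (hc : ∀ u, c' (φ u) = c u) (hd : ∀ u, d' (φ u) = d u) (hB : ∀ u, B' (φ u) ↔ B u) (v : V) :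
    Act G K K' c' d' B' (φ v) ↔ Act G K K' c d B v := by
  unfold Act
  rw [hB, en_iso h φ c c' hc, en_iso h φ (cl G K c d v) (cl G K c' d' (φ v))]
  · simp only [bal_iso h, Finset.card_filter, Finset.sum_map]
    simp [hc, hd]
  · intro u
    unfold cl
    rw [iso_dist h.tree, hc, hd]

lemma next_iso (h : Tree4 G) (φ : G ≃g G) {K K' : ℕ} {c d c' d' : V → Fin q} {B B' : V → Prop}
    (hc : ∀ u, c' (φ u) = c u) (hd : ∀ u, d' (φ u) = d u) (hB : ∀ u, B' (φ u) ↔ B u) (u : V) :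
    next G K K' c' d' B' (φ u) = next G K K' c d B u := by
  unfold next
  rw [hc, hd]
  congr 1
  refine propext ⟨?_, ?_⟩
  · rintro ⟨v, hv, hvu⟩
    refine ⟨φ.symm v, ?_, ?_⟩
    · rw [← act_iso h φ hc hd hB]; simpa using hv
    · rw [← iso_dist h.tree φ]; simpa using hvu
  · rintro ⟨v, hv, hvu⟩
    exact ⟨φ v, (act_iso h φ hc hd hB v).2 hv, by rwa [iso_dist h.tree]⟩

structure FB (G : SimpleGraph V) (K : ℕ) (B : (V → ℝ) → V → Prop) : Prop where
  meas : ∀ v, Measurable fun x => B x v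
  eqv : ∀ (φ : G ≃g G) x v, B (sh φ x) (φ v) ↔ B x v
  sep : ∀ x, Sep G K (B x)

section
variable {K K' : ℕ} {c d : (V → ℝ) → V → Fin q} {B : (V → ℝ) → V → Prop}

lemma act_meas (hc : Fiid G c) (hd : Fiid G d) (hB : FB G K B) (v : V) :
    Measurable fun x => Act G K K' (c x) (d x) (B x) v := by
  unfold Act
  refine (hB.meas v).and (Measurable.and ?_ ?_)
  · simp only [Finset.card_filter]
    refine measurableSet_setOfPred.1 (measurableSet_le (Finset.measurable_sum _ fun u _ => ?_) measurable_const)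
    exact Measurable.ite (measurableSet_eq_fun (hd.m u) (hc.m u)).compl measurable_const measurable_const
  · refine measurableSet_setOfPred.1 (measurableSet_lt (en_meas _ (fun u => ?_) _) (en_meas _ hc.m _))
    unfold cl
    split_ifs
    · exact hd.m u
    · exact hc.m u

lemma next_fiid [Countable V] (h : Tree4 G) (hc : Fiid G c) (hd : Fiid G d) (hB : FB G K B) :
    Fiid G (fun x => next G K K' (c x) (d x) (B x)) := by
  refine ⟨?_, ?_⟩
  · rw [measurable_pi_iff]
    intro u
    unfold next
    refine Measurable.ite ?_ (hd.m u) (hc.m u)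
    refine measurableSet_setOfPred.2 (Measurable.exists fun v => ?_)
    exact (act_meas hc hd hB v).and measurable_const
  · intro φ x v
    exact next_iso h φ (hc.eqv φ x) (hd.eqv φ x) (hB.eqv φ x) v

end
end T4


namespace T4
variable {V : Type} {G : SimpleGraph V} {q : ℕ}
open scoped ENNReal

variable {K K' : ℕ} {c d : (V → ℝ) → V → Fin q} {B : (V → ℝ) → V → Prop}

lemma tsum_bal (h : Tree4 G) (v : V) (K : ℕ) (g : V → ℝ≥0∞) (hg : ∀ a, ¬ G.dist v a ≤ K → g a = 0) :
    ∑' a, g a = ∑ a ∈ bal G v K, g a :=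
  tsum_eq_sum fun a ha => hg a fun h' => ha (h.mem_bal.2 h')

lemma cast_meas {α : Type*} [MeasurableSpace α] {f : α → ℕ} (hf : Measurable f) :
    Measurable fun x => (f x : ℝ≥0∞) :=
  (measurable_of_countable (fun n : ℕ => (n : ℝ≥0∞))).comp hf

open Classical in
lemma round_energy [Countable V] {μ : Measure (V → ℝ)} (h : Good G μ)
    (hc : Fiid G c) (hd : Fiid G d) (hB : FB G K B) (o : V) :
    E G μ (fun x => next G K K' (c x) (d x) (B x)) o + μ {x | Act G K K' (c x) (d x) (B x) o}
      ≤ E G μ c o := by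
  have hn := next_fiid (K' := K') h.toTree4 hc hd hB
  have ham := act_meas (K' := K') hc hd hB
  set A : (V → ℝ) → V → Prop := fun x v => Act G K K' (c x) (d x) (B x) v with hA
  have hAe : ∀ (φ : G ≃g G) x v, A (sh φ x) (φ v) ↔ A x v := fun φ x v =>
    act_iso h.toTree4 φ (hc.eqv φ x) (hd.eqv φ x) (hB.eqv φ x) v
  set n : (V → ℝ) → V → Fin q := fun x => next G K K' (c x) (d x) (B x) with hnn
  let F : ((V → ℝ) → V → Fin q) → (V → ℝ) → V → V → ℝ≥0∞ := fun b x v a =>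
    if A x v ∧ G.dist v a ≤ K + 1 then (mdeg G (b x) a : ℝ≥0∞) else 0
  have hFm : ∀ b : (V → ℝ) → V → Fin q, Fiid G b → ∀ v a, Measurable fun x => F b x v a := by
    intro b hb v a
    refine Measurable.ite (measurableSet_setOfPred.2 ((ham v).and measurable_const))
      (cast_meas (mdeg_meas b hb.m a)) measurable_const
  have hFe : ∀ b : (V → ℝ) → V → Fin q, Fiid G b → ∀ (φ : G ≃g G) x u v,
      F b (sh φ x) (φ u) (φ v) = F b x u v := by
    intro b hb φ x u v
    simp only [F, hAe, iso_dist h.tree, mdeg_iso h.toTree4 φ (b x) (b (sh φ x)) (hb.eqv φ x)]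
  have hrow : ∀ b x v, ∑' a, F b x v a = if A x v then (en G (b x) (bal G v (K+1)) : ℝ≥0∞) else 0 := by
    intro b x v
    rw [tsum_bal h.toTree4 v (K+1) _ (fun a ha => by simp [F, ha])]
    split_ifs with hv
    · rw [en, Nat.cast_sum]
      refine Finset.sum_congr rfl fun a ha => ?_
      simp [F, hv, h.mem_bal.1 ha]
    · simp [F, hv]
  have hcol : ∀ b x, ∑' v, F b x v o =
      if (∃ v, A x v ∧ G.dist v o ≤ K + 1) then (mdeg G (b x) o : ℝ≥0∞) else 0 := by
    intro b x
    split_ifs with hv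
    · obtain ⟨v, hv, hvo⟩ := hv
      rw [tsum_eq_single v]
      · simp [F, hv, hvo]
      · intro w hw
        simp only [F, ite_eq_right_iff]
        rintro ⟨hw1, hw2⟩
        exfalso
        have := h.tree.connected.dist_triangle (u := w) (v := o) (w := v)
        rw [G.dist_comm (u := o)] at this
        exact hw (hB.sep x w v hw1.1 hv.1 (by omega))
    · push Not at hv
      rw [ENNReal.tsum_eq_zero]
      intro v
      simp only [F, ite_eq_right_iff]
      rintro ⟨h1, h2⟩
      have := hv v h1
      omega
  have hmA : MeasurableSet {x | A x o} := measurableSet_setOfPred.2 (ham o)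
  have h1 : ∫⁻ x, ∑' a, F n x o a ∂μ + μ {x | A x o} ≤ ∫⁻ x, ∑' a, F c x o a ∂μ := by
    rw [← lintegral_indicator_one hmA, ← lintegral_add_right _ (measurable_one.indicator hmA)]
    refine lintegral_mono fun x => ?_
    simp only [hrow]
    by_cases hx : A x o
    · have := next_en h.toTree4 (hB.sep x) hx
      simp only [hx, if_true]
      rw [Set.indicator_of_mem (show x ∈ {x | A x o} from hx)]
      rw [Pi.one_apply]
      exact_mod_cast this
    · simp only [hx, if_false]
      rw [Set.indicator_of_notMem (show x ∉ {x | A x o} from hx)]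
      simp
  rw [h.mtp (F n) (hFm n hn) (hFe n hn), h.mtp (F c) (hFm c hc) (hFe c hc)] at h1
  have hms : MeasurableSet {x | ∃ v, A x v ∧ G.dist v o ≤ K + 1} :=
    measurableSet_setOfPred.2 (Measurable.exists fun v => (ham v).and measurable_const)
  let g : (V → ℝ) → ℝ≥0∞ := fun x =>
    if (∃ v, A x v ∧ G.dist v o ≤ K + 1) then 0 else (mdeg G (c x) o : ℝ≥0∞)
  have hg : Measurable g := Measurable.ite hms measurable_const (cast_meas (mdeg_meas c hc.m o))
  have e1 : E G μ n o = ∫⁻ x, ∑' v, F n x v o ∂μ + ∫⁻ x, g x ∂μ := by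
    rw [← lintegral_add_right _ hg]
    refine lintegral_congr fun x => ?_
    simp only [hcol, g]
    split_ifs with hx
    · simp
    · simp only [zero_add, Nat.cast_inj]
      exact next_far h.toTree4 hx
  have e2 : E G μ c o = ∫⁻ x, ∑' v, F c x v o ∂μ + ∫⁻ x, g x ∂μ := by
    rw [← lintegral_add_right _ hg]
    refine lintegral_congr fun x => ?_
    simp only [hcol, g]
    split_ifs with hx <;> simp
  rw [e1, e2, add_right_comm]
  gcongr

open Classical in
lemma round_change [Countable V] {μ : Measure (V → ℝ)} (h : Good G μ)
    (hc : Fiid G c) (hd : Fiid G d) (hB : FB G K B) (o : V) :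
    μ {x | next G K K' (c x) (d x) (B x) o ≠ c x o} ≤
      K' * μ {x | Act G K K' (c x) (d x) (B x) o} := by
  have hn := next_fiid (K' := K') h.toTree4 hc hd hB
  have ham := act_meas (K' := K') hc hd hB
  set A : (V → ℝ) → V → Prop := fun x v => Act G K K' (c x) (d x) (B x) v with hA
  have hAe : ∀ (φ : G ≃g G) x v, A (sh φ x) (φ v) ↔ A x v := fun φ x v =>
    act_iso h.toTree4 φ (hc.eqv φ x) (hd.eqv φ x) (hB.eqv φ x) v
  let F : (V → ℝ) → V → V → ℝ≥0∞ := fun x v a =>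
    if A x v ∧ G.dist v a ≤ K ∧ d x a ≠ c x a then 1 else 0
  have hFm : ∀ v a, Measurable fun x => F x v a := by
    intro v a
    refine Measurable.ite (measurableSet_setOfPred.2 ((ham v).and (measurable_const.and ?_)))
      measurable_const measurable_const
    exact measurableSet_setOfPred.1 (measurableSet_eq_fun (hd.m a) (hc.m a)).compl
  have hFe : ∀ (φ : G ≃g G) x u v, F (sh φ x) (φ u) (φ v) = F x u v := by
    intro φ x u v
    simp only [F, hAe, iso_dist h.tree, hc.eqv, hd.eqv]
  have hmA : MeasurableSet {x | A x o} := measurableSet_setOfPred.2 (ham o)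
  have hmN : MeasurableSet {x | next G K K' (c x) (d x) (B x) o ≠ c x o} :=
    (measurableSet_eq_fun (hn.m o) (hc.m o)).compl
  calc μ {x | next G K K' (c x) (d x) (B x) o ≠ c x o} 
      = ∫⁻ x, {x | next G K K' (c x) (d x) (B x) o ≠ c x o}.indicator 1 x ∂μ :=
        (lintegral_indicator_one hmN).symm
    _ ≤ ∫⁻ x, ∑' v, F x v o ∂μ := by
        refine lintegral_mono fun x => ?_
        by_cases hx : x ∈ {x | next G K K' (c x) (d x) (B x) o ≠ c x o}
        swap
        · rw [Set.indicator_of_notMem hx]; exact zero_le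
        rw [Set.indicator_of_mem hx]
        have hx' : next G K K' (c x) (d x) (B x) o ≠ c x o := hx
        unfold next at hx'
        split_ifs at hx' with hv
        · obtain ⟨v, hv, hvo⟩ := hv
          refine le_trans ?_ (ENNReal.le_tsum v)
          simp only [F]
          rw [if_pos ⟨hv, hvo, hx'⟩]
          rfl
        · exact absurd rfl hx'
    _ = ∫⁻ x, ∑' a, F x o a ∂μ := (h.mtp F hFm hFe o).symm
    _ ≤ ∫⁻ x, K' * {x | A x o}.indicator 1 x ∂μ := by
        refine lintegral_mono fun x => ?_
        beta_reduce
        rw [tsum_bal h.toTree4 o K _ (fun a ha => by simp [F, ha])]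
        by_cases hx : A x o
        · rw [Set.indicator_of_mem (show x ∈ {x | A x o} from hx)]
          have h2 := hx.2.1
          rw [Finset.card_filter] at h2
          have h3 : ∑ a ∈ bal G o K, F x o a =
              ((∑ a ∈ bal G o K, if d x a ≠ c x a then 1 else 0 : ℕ) : ℝ≥0∞) := by
            rw [Nat.cast_sum]
            refine Finset.sum_congr rfl fun a ha => ?_
            simp [F, hx, h.mem_bal.1 ha]
          rw [h3]
          simp only [Pi.one_apply, mul_one]
          exact_mod_cast h2
        · simp [F, hx]
    _ = K' * μ {x | A x o} := by
        rw [lintegral_const_mul _ (measurable_one.indicator hmA), lintegral_indicator_one hmA]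
end T4


namespace T4
variable {V : Type} {G : SimpleGraph V} {q : ℕ}
open scoped ENNReal

noncomputable def code (n : ℕ) (r : ℝ) : ℕ := Encodable.encode ⌊(n : ℝ) * r⌋

lemma code_meas (n : ℕ) : Measurable (code n) := by
  unfold code
  exact (measurable_of_countable (Encodable.encode : ℤ → ℕ)).comp
    (Int.measurable_floor.comp (measurable_const.mul measurable_id))

abbrev Par (q : ℕ) := ℕ × ℕ × List (Fin q)

noncomputable def dp [NeZero q] (p : Par q) (x : V → ℝ) (u : V) : Fin q :=
  p.2.2.getD (code p.1 (x u)) 0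

def Bp (G : SimpleGraph V) (K : ℕ) (p : Par q) (x : V → ℝ) (v : V) : Prop :=
  code p.1 (x v) = p.2.1 ∧ ∀ u, G.dist v u ≤ 2 * K + 2 → code p.1 (x u) = p.2.1 → u = v

lemma dp_fiid [NeZero q] (p : Par q) : Fiid G (dp (V := V) p) := by
  refine ⟨?_, ?_⟩
  · rw [measurable_pi_iff]
    intro u
    exact (measurable_of_countable (fun k => p.2.2.getD k 0)).comp
      ((code_meas p.1).comp (measurable_pi_apply u))
  · intro φ x v
    simp [dp, sh]

lemma Bp_fb [Countable V] (h : Tree4 G) (K : ℕ) (p : Par q) : FB G K (Bp G K p) := by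
  have hm : ∀ u : V, Measurable fun x : V → ℝ => code p.1 (x u) = p.2.1 := fun u =>
    measurableSet_setOfPred.1 (measurableSet_eq_fun ((code_meas p.1).comp (measurable_pi_apply u))
      measurable_const)
  refine ⟨?_, ?_, ?_⟩
  · intro v
    unfold Bp
    refine (hm v).and (Measurable.forall fun u => Measurable.imp measurable_const
      (Measurable.imp (hm u) measurable_const))
  · intro φ x v
    unfold Bp
    refine and_congr (by simp [sh]) ⟨fun H u hu hc => ?_, fun H u hu hc => ?_⟩
    · exact φ.injective (H (φ u) (by rwa [iso_dist h.tree]) (by simpa [sh] using hc))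
    · have := H (φ.symm u) (by rw [← iso_dist h.tree φ]; simpa using hu) hc
      rw [← this]; simp
  · intro x v w hv hw hd
    exact (hv.2 w hd hw.1).symm

lemma par_exists [NeZero q] (h : Tree4 G) (K : ℕ) (x : V → ℝ) (hx : Function.Injective x) (v : V)
    (d : V → Fin q) : ∃ p : Par q, Bp G K p x v ∧ ∀ u, G.dist v u ≤ K → dp p x u = d u := by
  have h1 : ∀ᶠ n : ℕ in Filter.atTop, ∀ u ∈ bal G v (2*K+2), ∀ w ∈ bal G v (2*K+2),
      code n (x u) = code n (x w) → u = w := by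
    rw [Filter.eventually_all_finset]
    intro u _
    rw [Filter.eventually_all_finset]
    intro w _
    by_cases e : u = w
    · simp [e]
    have hne : 0 < |x u - x w| := abs_pos.2 (sub_ne_zero.2 fun h' => e (hx h'))
    obtain ⟨N, hN⟩ := exists_nat_gt (1 / |x u - x w|)
    filter_upwards [Filter.eventually_ge_atTop N] with n hn hc
    exfalso
    have h2 := Encodable.encode_injective hc
    have h3 := Int.abs_sub_lt_one_of_floor_eq_floor h2
    rw [← mul_sub, abs_mul, Nat.abs_cast] at h3
    have h4 : (N : ℝ) ≤ n := by exact_mod_cast hn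
    rw [div_lt_iff₀ hne] at hN
    nlinarith
  obtain ⟨n, hn⟩ := h1.exists
  classical
  let M := (bal G v (2*K+2)).sup (fun u => code n (x u))
  let g : ℕ → Fin q := fun k =>
    if hk : ∃ u ∈ bal G v (2*K+2), code n (x u) = k then d hk.choose else 0
  refine ⟨(n, code n (x v), (List.range (M+1)).map g), ⟨rfl, ?_⟩, ?_⟩
  · intro u hu hc
    exact hn u (h.mem_bal.2 hu) v (h.mem_bal.2 (by simp)) hc
  · intro u hu
    have hu' : u ∈ bal G v (2*K+2) := h.mem_bal.2 (by omega)
    have hM : code n (x u) ≤ M := Finset.le_sup (f := fun u => code n (x u)) hu'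
    have hk : ∃ w ∈ bal G v (2*K+2), code n (x w) = code n (x u) := ⟨u, hu', rfl⟩
    simp only [dp]
    rw [List.getD_eq_getElem _ _ (by simp; omega)]
    simp only [List.getElem_map, List.getElem_range, g]
    rw [dif_pos hk, hn _ hk.choose_spec.1 u hu' hk.choose_spec.2]

lemma E_le (h : Tree4 G) {μ : Measure (V → ℝ)} [IsProbabilityMeasure μ]
    (c : (V → ℝ) → V → Fin q) (o : V) : E G μ c o ≤ 4 := by
  calc E G μ c o ≤ ∫⁻ _, 4 ∂μ := by
        refine lintegral_mono fun x => ?_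
        have : mdeg G (c x) o ≤ 4 := (Finset.card_filter_le _ _).trans (h.card_nb o).le
        have h2 : (mdeg G (c x) o : ℝ≥0∞) ≤ ((4 : ℕ) : ℝ≥0∞) := Nat.cast_le.2 this
        exact h2.trans (by norm_num)
    _ = 4 := by simp

noncomputable def seq [NeZero q] (G : SimpleGraph V) (K K' : ℕ) (e : ℕ → Par q)
    (c0 : (V → ℝ) → V → Fin q) : ℕ → (V → ℝ) → V → Fin q
  | 0 => c0
  | j+1 => fun x => next G K K' (seq G K K' e c0 j x) (dp (e j) x) (Bp G K (e j) x)

theorem thmA [NeZero q] [Countable V] {μ : Measure (V → ℝ)} [IsProbabilityMeasure μ] (h : Good G μ)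
    (K K' : ℕ) (c0 : (V → ℝ) → V → Fin q) (hc0 : Fiid G c0) :
    ∃ c : (V → ℝ) → V → Fin q, Fiid G c ∧ (∀ᵐ x ∂μ, ∀ v, ¬ Aug G K K' (c x) v) ∧
      ∀ v, μ {x | c x v ≠ c0 x v} ≤ K' * E G μ c0 v := by
  obtain ⟨f, hf⟩ := exists_surjective_nat (Par q)
  let e : ℕ → Par q := fun j => f (Nat.unpair j).1
  have he : ∀ p N, ∃ j, N ≤ j ∧ e j = p := by
    intro p N
    obtain ⟨i, rfl⟩ := hf p
    exact ⟨Nat.pair i N, Nat.right_le_pair _ _, by simp [e]⟩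
  let c := seq G K K' e c0
  have hc : ∀ j, Fiid G (c j) := by
    intro j
    induction j with
    | zero => exact hc0
    | succ j ih => exact next_fiid h.toTree4 ih (dp_fiid _) (Bp_fb h.toTree4 K _)
  let a : V → ℕ → ℝ≥0∞ := fun v j =>
    μ {x | Act G K K' (c j x) (dp (e j) x) (Bp G K (e j) x) v}
  have hen : ∀ v j, E G μ (c (j+1)) v + a v j ≤ E G μ (c j) v := fun v j =>
    round_energy h (hc j) (dp_fiid _) (Bp_fb h.toTree4 K _) v
  have hch : ∀ v j, μ {x | c (j+1) x v ≠ c j x v} ≤ K' * a v j := fun v j =>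
    round_change h (hc j) (dp_fiid _) (Bp_fb h.toTree4 K _) v
  have hpart : ∀ v n, E G μ (c n) v + ∑ j ∈ Finset.range n, a v j ≤ E G μ c0 v := by
    intro v n
    induction n with
    | zero => simp [c, seq]
    | succ n ih =>
      rw [Finset.sum_range_succ, add_comm (∑ j ∈ Finset.range n, a v j), ← add_assoc]
      exact le_trans (by gcongr; exact hen v n) ih
  have hsa : ∀ v, ∑' j, a v j ≤ E G μ c0 v := by
    intro v
    refine ENNReal.tsum_le_of_sum_range_le fun n => le_trans le_add_self (hpart v n)
  have hsum' : ∀ v, ∑' j, μ {x | c (j+1) x v ≠ c j x v} ≤ K' * E G μ c0 v := by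
    intro v
    calc _ ≤ ∑' j, K' * a v j := ENNReal.tsum_le_tsum (hch v)
      _ = K' * ∑' j, a v j := ENNReal.tsum_mul_left
      _ ≤ _ := by gcongr; exact hsa v
  obtain ⟨o⟩ := h.tree.connected.nonempty
  obtain ⟨g, hg, hlim, hchg⟩ := limit (μ := μ) c hc (K' * E G μ c0 o)
    (ENNReal.mul_ne_top (by simp) (ne_top_of_le_ne_top (by simp) (E_le h.toTree4 c0 o)))
    (fun v => (hsum' v).trans (by rw [E_hom h hc0 v o]))
  refine ⟨g, hg, ?_, fun v => (hchg v).trans (by rw [E_hom h hc0 v o])⟩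
  filter_upwards [h.inj, hlim] with x hx hl v
  rintro ⟨d, hd1, hd2, hd3⟩
  obtain ⟨p, hpB, hpd⟩ := par_exists h.toTree4 K x hx v d
  have hev : ∀ᶠ j in Filter.atTop, ∀ u ∈ bal G v (K+2), c j x u = g x u := by
    rw [Filter.eventually_all_finset]
    intro u _
    exact hl u
  obtain ⟨N, hN⟩ := Filter.eventually_atTop.1 hev
  obtain ⟨j, hj, hje⟩ := he p N
  have hcj : ∀ u, G.dist v u ≤ K + 2 → c j x u = g x u := fun u hu =>
    hN j hj u (h.mem_bal.2 hu)
  have hcj' : ∀ u, G.dist v u ≤ K + 2 → c (j+1) x u = g x u := fun u hu =>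
    hN (j+1) (by omega) u (h.mem_bal.2 hu)
  have hact : Act G K K' (c j x) (dp p x) (Bp G K p x) v := by
    refine ⟨hpB, ?_, ?_⟩
    · refine le_trans (le_of_eq ?_) hd2
      congr 1
      refine Finset.filter_congr fun u hu => ?_
      have := h.mem_bal.1 hu
      rw [hpd u this, hcj u (by omega)]
    · rw [en_congr h.toTree4 (c := c j x) (c' := g x) hcj]
      rw [en_congr h.toTree4 (c := cl G K (c j x) (dp p x) v) (c' := d)]
      · exact hd3
      · intro u hu
        unfold cl
        split_ifs with hk
        · exact hpd u hk
        · rw [hcj u hu, hd1 u (by omega)]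
  have hgd : ∀ u, d u = g x u := by
    intro u
    by_cases hk : G.dist v u ≤ K
    · rw [← hcj' u (by omega), ← hpd u hk]
      have : c (j+1) x u = next G K K' (c j x) (dp p x) (Bp G K p x) u := by
        rw [← hje]; rfl
      rw [this]
      unfold next
      rw [if_pos ⟨v, hact, hk⟩]
    · exact hd1 u (by omega)
  have : d = g x := funext hgd
  rw [this] at hd3
  exact lt_irrefl _ hd3
end T4


namespace T4
variable {V : Type} {G : SimpleGraph V} {q : ℕ}
open scoped ENNReal

lemma R_iso (φ : G ≃g G) {c c' : V → Fin q} (hc : ∀ u, c' (φ u) = c u) : ∀ (n : ℕ) (u v : V),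
    R G c' n (φ u) (φ v) ↔ R G c n u v := by
  intro n
  induction n with
  | zero => intro u v; simp only [R, hc, φ.map_adj_iff]
  | succ n ih =>
    intro v w
    simp only [R]
    have hadj : ∀ a b, G.Adj (φ a) (φ b) ↔ G.Adj a b := fun a b => φ.map_adj_iff
    constructor
    · rintro ⟨u, h1, h2, h3, h4, h5⟩
      obtain ⟨u, rfl⟩ := φ.surjective u
      refine ⟨u, (ih _ _).1 h1, (hadj _ _).1 h2, fun e => h3 (by rw [e]), by simpa only [hc] using h4, ?_⟩
      intro w' a1 a2 a3
      exact φ.injective (h5 (φ w') ((hadj _ _).2 a1) (fun e => a2 (φ.injective e)) (by rw [hc, hc, a3]))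
    · rintro ⟨u, h1, h2, h3, h4, h5⟩
      refine ⟨φ u, (ih _ _).2 h1, (hadj _ _).2 h2, fun e => h3 (φ.injective e),
        by simpa only [hc] using h4, ?_⟩
      intro w' a1 a2 a3
      obtain ⟨w', rfl⟩ := φ.surjective w'
      rw [hc, hc] at a3
      rw [h5 w' ((hadj _ _).1 a1) (fun e => a2 (by rw [e])) a3]

lemma R_meas [Countable V] {c : (V → ℝ) → V → Fin q} (hc : Fiid G c) : ∀ (n : ℕ) (u v : V),
    Measurable fun x => R G (c x) n u v := by
  have he : ∀ u v, Measurable fun x => c x u = c x v := fun u v =>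
    measurableSet_setOfPred.1 (measurableSet_eq_fun (hc.m u) (hc.m v))
  intro n
  induction n with
  | zero => intro u v; exact measurable_const.and (he u v)
  | succ n ih =>
    intro v w
    refine Measurable.exists fun u => (ih u v).and (measurable_const.and (measurable_const.and
      ((he w v).not.and (Measurable.forall fun w' => Measurable.imp measurable_const
        (Measurable.imp measurable_const (Measurable.imp (he _ _) measurable_const))))))

open Classical in
theorem thmB [Countable V] {μ : Measure (V → ℝ)} [IsProbabilityMeasure μ] (h : Good G μ)
    (hq : 3 ≤ q) (N r : ℕ) (c : (V → ℝ) → V → Fin q) (hc : Fiid G c)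
    (hA : ∀ᵐ x ∂μ, ∀ v, ¬ Aug G N (2 * N + 1) (c x) v)
    (hr : ∀ᵐ x ∂μ, ∀ v, ∀ n ≤ N, r * ((nb G v).filter (fun u => R G (c x) n u v)).card ≤
      ((nb G v).filter (fun w => R G (c x) (n + 1) v w)).card) (o : V) :
    ∑ n ∈ Finset.range (N+1), (r : ℝ≥0∞) ^ n * E G μ c o ≤ 1 := by
  let F : ℕ → (V → ℝ) → V → V → ℝ≥0∞ := fun n x u v => if R G (c x) n u v then 1 else 0
  have hFm : ∀ n u v, Measurable fun x => F n x u v := fun n u v =>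
    Measurable.ite (measurableSet_setOfPred.2 (R_meas hc n u v)) measurable_const measurable_const
  have hFe : ∀ n (φ : G ≃g G) x u v, F n (sh φ x) (φ u) (φ v) = F n x u v := by
    intro n φ x u v
    simp only [F, R_iso φ (hc.eqv φ x)]
  have hin : ∀ n x, ∑' u, F n x u o = ((nb G o).filter (fun u => R G (c x) n u o)).card := by
    intro n x
    rw [tsum_eq_sum (s := nb G o), Finset.card_filter, Nat.cast_sum]
    · simp [F]
    · intro u hu
      simp only [F, ite_eq_right_iff]
      exact fun h' => absurd (h.mem_nb.2 (R_adj h').symm) hu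
  have hout : ∀ n x, ∑' u, F n x o u = ((nb G o).filter (fun u => R G (c x) n o u)).card := by
    intro n x
    rw [tsum_eq_sum (s := nb G o), Finset.card_filter, Nat.cast_sum]
    · simp [F]
    · intro u hu
      simp only [F, ite_eq_right_iff]
      exact fun h' => absurd (h.mem_nb.2 (R_adj h')) hu
  have hm' : ∀ n, Measurable fun x => ∑' u, F n x u o := fun n =>
    Measurable.ennreal_tsum fun u => hFm n u o
  let ρ : ℕ → ℝ≥0∞ := fun n => ∫⁻ x, ∑' u, F n x u o ∂μ
  have hρ : ∀ n ≤ N, r * ρ n ≤ ρ (n+1) := by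
    intro n hn
    simp only [ρ]
    rw [← h.mtp (F (n+1)) (hFm _) (hFe _) o, ← lintegral_const_mul _ (hm' n)]
    refine lintegral_mono_ae ?_
    filter_upwards [hr] with x hx
    rw [hin, hout]
    exact_mod_cast hx o n hn
  have h0 : ρ 0 = E G μ c o := by
    refine lintegral_congr fun x => ?_
    rw [hin, mdeg]
    congr 2
    refine Finset.filter_congr fun u hu => ?_
    have := h.mem_nb.1 hu
    simp [R, this.symm]
  have hpow : ∀ n ≤ N, (r : ℝ≥0∞) ^ n * E G μ c o ≤ ρ n := by
    intro n
    induction n with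
    | zero => intro _; simp [h0]
    | succ n ih =>
      intro hn
      refine le_trans ?_ (hρ n (by omega))
      rw [pow_succ', mul_assoc]
      gcongr
      exact ih (by omega)
  calc ∑ n ∈ Finset.range (N+1), (r : ℝ≥0∞) ^ n * E G μ c o 
      ≤ ∑ n ∈ Finset.range (N+1), ρ n :=
        Finset.sum_le_sum fun n hn => hpow n (by simp at hn; omega)
    _ = ∫⁻ x, ∑ n ∈ Finset.range (N+1), ∑' u, F n x u o ∂μ :=
        (lintegral_finsetSum _ fun n _ => hm' n).symm
    _ ≤ ∫⁻ _, 1 ∂μ := by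
        refine lintegral_mono_ae ?_
        filter_upwards [hA] with x hx
        have : ∑ n ∈ Finset.range (N+1), ((nb G o).filter (fun u => R G (c x) n u o)).card ≤ 1 := by
          rw [← Finset.card_sigma, Finset.card_le_one]
          rintro ⟨n, u⟩ ha ⟨n', u'⟩ hb
          simp only [Finset.mem_sigma, Finset.mem_range, Finset.mem_filter] at ha hb
          obtain ⟨h1, h2⟩ := in_unique h.toTree4 hq hx ha.2.2 hb.2.2 (by omega) (by omega)
          subst h1 h2
          rfl
        simp only [hin]
        exact_mod_cast this
    _ = 1 := by simp
end T4


namespace T4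
variable {V : Type} {G : SimpleGraph V} {q : ℕ}
open scoped ENNReal

lemma step3 [Countable V] {μ : Measure (V → ℝ)} [IsProbabilityMeasure μ] (h : Good G μ) (N : ℕ) :
    ∃ c : (V → ℝ) → V → Fin 3, Fiid G c ∧ ∀ o, ((N + 1 : ℕ) : ℝ≥0∞) * E G μ c o ≤ 1 := by
  obtain ⟨c, hc, hA, -⟩ := thmA h N (2 * N + 1) (fun _ _ => (0 : Fin 3))
    ⟨measurable_const, fun _ _ _ => rfl⟩
  refine ⟨c, hc, fun o => ?_⟩
  have := thmB h le_rfl N 1 c hc hA (by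
    filter_upwards [hA] with x hx v n hn
    exact out3 h.toTree4 hn hx v) o
  simpa using this

lemma step4 [Countable V] {μ : Measure (V → ℝ)} [IsProbabilityMeasure μ] (h : Good G μ) (N : ℕ)
    (c0 : {c : (V → ℝ) → V → Fin 4 // Fiid G c}) :
    ∃ c : {c : (V → ℝ) → V → Fin 4 // Fiid G c}, (∀ o, E G μ c.1 o ≤ ((3 : ℝ≥0∞) ^ N)⁻¹) ∧
      ∀ v, μ {x | c.1 x v ≠ c0.1 x v} ≤ ((2 * N + 1 : ℕ) : ℝ≥0∞) * E G μ c0.1 v := by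
  obtain ⟨c, hc, hA, hch⟩ := thmA h N (2 * N + 1) c0.1 c0.2
  refine ⟨⟨c, hc⟩, fun o => ?_, hch⟩
  have := thmB h (by norm_num) N 3 c hc hA (by
    filter_upwards [hA] with x hx v n hn
    exact out4 h.toTree4 hn hx v) o
  rw [ENNReal.le_inv_iff_mul_le, mul_comm]
  refine le_trans ?_ this
  have h2 := Finset.single_le_sum (f := fun n => ((3 : ℕ) : ℝ≥0∞) ^ n * E G μ c o)
    (fun _ _ => zero_le) (Finset.self_mem_range_succ N)
  simpa using h2

lemma cast_fiid {c : (V → ℝ) → V → Fin 3} (hc : Fiid G c) :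
    Fiid G (fun x v => (c x v).castSucc) := by
  refine ⟨?_, fun φ x v => by rw [hc.eqv]⟩
  rw [measurable_pi_iff]
  intro v
  exact (measurable_of_countable (Fin.castSucc : Fin 3 → Fin 4)).comp (hc.m v)

lemma cast_E {μ : Measure (V → ℝ)} {c : (V → ℝ) → V → Fin 3} (o : V) :
    E G μ (fun x v => (c x v).castSucc) o = E G μ c o := by
  simp [E, mdeg]

lemma tail_small (ε : ℝ≥0∞) (hε : 0 < ε) :
    ∃ k0 : ℕ, ∑' k : ℕ, (((2 * (k + k0) + 3 : ℕ) : ℝ≥0∞) * ((3 : ℝ≥0∞) ^ (k + k0))⁻¹) < ε := by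
  have hfin : ∑' m : ℕ, (((2 * m + 3 : ℕ) : ℝ≥0∞) * ((3 : ℝ≥0∞) ^ m)⁻¹) ≠ ∞ := by
    have hlt : (2 : ℝ≥0∞) * 3⁻¹ < 1 := by
      rw [← div_eq_mul_inv, ENNReal.div_lt_iff] <;> norm_num
    refine ne_top_of_le_ne_top (b := ∑' m : ℕ, (3 : ℝ≥0∞) * (2 * 3⁻¹) ^ m) ?_
      (ENNReal.tsum_le_tsum fun m => ?_)
    · rw [ENNReal.tsum_mul_left, ENNReal.tsum_geometric]
      refine ENNReal.mul_ne_top (by norm_num) (ENNReal.inv_ne_top.2 ?_)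
      exact (tsub_pos_of_lt hlt).ne'
    · rw [mul_pow, ENNReal.inv_pow, ← mul_assoc]
      gcongr
      have : 2 * m + 3 ≤ 3 * 2 ^ m := by
        induction m with
        | zero => norm_num
        | succ m ih => rw [pow_succ]; have := Nat.one_le_two_pow (n := m); omega
      exact_mod_cast this
  have ht := ENNReal.tendsto_sum_nat_add
    (fun m : ℕ => ((2 * m + 3 : ℕ) : ℝ≥0∞) * ((3 : ℝ≥0∞) ^ m)⁻¹) hfin
  exact (ht.eventually (gt_mem_nhds hε)).exists

theorem final [Countable V] {μ : Measure (V → ℝ)} [IsProbabilityMeasure μ] (h : Good G μ)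
    (ε : ℝ≥0∞) (hε : 0 < ε) (hε' : ε ≠ ∞) :
    ∃ f : (V → ℝ) → V → Fin 4, Fiid G f ∧ (∀ᵐ x ∂μ, ∀ u v : V, G.Adj u v → f x u ≠ f x v) ∧
      ∀ v, μ {x | f x v = 3} < ε := by
  have hε2 : 0 < ε / 2 := ENNReal.half_pos hε.ne'
  obtain ⟨k0, hk0⟩ := tail_small (ε / 2) hε2
  have hpos : ε / 2 / ((2 * k0 + 1 : ℕ) : ℝ≥0∞) ≠ 0 :=
    (ENNReal.div_pos hε2.ne' (ENNReal.natCast_ne_top _)).ne'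
  obtain ⟨N, hN⟩ := ENNReal.exists_inv_nat_lt hpos
  obtain ⟨c3, hc3, hE3⟩ := step3 h N
  have hE0 : ∀ o, ((2 * k0 + 1 : ℕ) : ℝ≥0∞) * E G μ c3 o < ε / 2 := by
    intro o
    have h1 : E G μ c3 o ≤ ((N : ℝ≥0∞))⁻¹ := by
      rw [ENNReal.le_inv_iff_mul_le, mul_comm]
      refine le_trans ?_ (hE3 o)
      gcongr
      omega
    exact ENNReal.mul_lt_of_lt_div' (h1.trans_lt hN)
  choose st hst1 hst2 using fun N c0 => step4 (μ := μ) h N c0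
  let s : ℕ → {c : (V → ℝ) → V → Fin 4 // Fiid G c} := fun k =>
    Nat.rec ⟨_, cast_fiid hc3⟩ (fun k c => st (k + k0) c) k
  have hsE : ∀ k o, E G μ (s (k+1)).1 o ≤ ((3 : ℝ≥0∞) ^ (k + k0))⁻¹ := fun k o => hst1 _ _ o
  have hs0 : ∀ v, μ {x | (s 1).1 x v ≠ (s 0).1 x v} ≤ ((2 * k0 + 1 : ℕ) : ℝ≥0∞) * E G μ c3 v := by
    intro v
    have := hst2 (0 + k0) (s 0) v
    have e : E G μ (s 0).1 v = E G μ c3 v := cast_E v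
    rw [e, zero_add] at this
    simpa [s] using this
  have hs1 : ∀ k v, μ {x | (s (k+1+1)).1 x v ≠ (s (k+1)).1 x v} ≤
      ((2 * (k + k0) + 3 : ℕ) : ℝ≥0∞) * ((3 : ℝ≥0∞) ^ (k + k0))⁻¹ := by
    intro k v
    refine (hst2 (k + 1 + k0) (s (k+1)) v).trans ?_
    refine mul_le_mul' (Nat.cast_le.2 (by omega)) (hsE k v)
  obtain ⟨o⟩ := h.tree.connected.nonempty
  set T := ∑' k : ℕ, (((2 * (k + k0) + 3 : ℕ) : ℝ≥0∞) * ((3 : ℝ≥0∞) ^ (k + k0))⁻¹) with hT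
  have hSlt : ((2 * k0 + 1 : ℕ) : ℝ≥0∞) * E G μ c3 o + T < ε := by
    rw [← ENNReal.add_halves ε]
    exact ENNReal.add_lt_add (hE0 o) hk0
  obtain ⟨f, hf, hlim, hchg⟩ := limit (μ := μ) (fun j => (s j).1) (fun j => (s j).2)
    (((2 * k0 + 1 : ℕ) : ℝ≥0∞) * E G μ c3 o + T) (ne_top_of_lt hSlt) (by
      intro v
      rw [tsum_eq_zero_add' ENNReal.summable]
      refine add_le_add ?_ (ENNReal.tsum_le_tsum fun k => hs1 k v)
      rw [E_hom h hc3 o v]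
      exact hs0 v)
  refine ⟨f, hf, ?_, fun v => ?_⟩
  · have hev : ∀ᵐ x ∂μ, ∀ v, ∀ᶠ k in Filter.atTop, mdeg G ((s (k+1)).1 x) v = 0 := by
      rw [ae_all_iff]
      intro v
      have hbc := ae_eventually_notMem (μ := μ)
        (s := fun k => {x | 1 ≤ (mdeg G ((s (k+1)).1 x) v : ℝ≥0∞)}) (by
          refine ne_top_of_le_ne_top (ne_top_of_lt hk0) (ENNReal.tsum_le_tsum fun k => ?_)
          have h1 := mul_meas_ge_le_lintegral (μ := μ)
            (cast_meas (mdeg_meas (G := G) (s (k+1)).1 (s (k+1)).2.m v)) 1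
          rw [one_mul] at h1
          refine (h1.trans (hsE k v)).trans ?_
          refine le_mul_of_one_le_left zero_le ?_
          exact_mod_cast (by omega : 1 ≤ 2 * (k + k0) + 3))
      filter_upwards [hbc] with x hx
      filter_upwards [hx] with k hk
      by_contra hne
      refine hk ?_
      have : 1 ≤ mdeg G ((s (k+1)).1 x) v := Nat.one_le_iff_ne_zero.2 hne
      exact_mod_cast (Nat.cast_le (α := ℝ≥0∞)).2 this
    filter_upwards [hev, hlim] with x hx hl u v huv e
    have hu := (Filter.tendsto_add_atTop_nat 1).eventually (hl u)
    have hv := (Filter.tendsto_add_atTop_nat 1).eventually (hl v)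
    obtain ⟨k, h1, h2, h3⟩ := ((hx v).and (hu.and hv)).exists
    rw [mdeg, Finset.card_eq_zero, Finset.filter_eq_empty_iff] at h1
    exact h1 (h.mem_nb.2 huv.symm) (by rw [h2, h3, e])
  · refine lt_of_le_of_lt (le_trans (measure_mono ?_) (hchg v)) hSlt
    intro x hx
    have hx' : f x v = 3 := hx
    show f x v ≠ (c3 x v).castSucc
    rw [hx']
    intro e
    have := congrArg Fin.val e
    have h2 := (c3 x v).isLt
    simp at this
    omega
end T4

theorem fiid_approximate_four_coloring_of_T4
    (V : Type) [Countable V] [Infinite V]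
    (G : SimpleGraph V) (hconn : G.Connected) (hacyc : G.IsAcyclic)
    (hreg : ∀ v : V, (G.neighborSet v).ncard = 4)
    (μ : Measure (V → ℝ)) [IsProbabilityMeasure μ]
    (hμ : ∀ s : Finset V,
      Measure.map (fun (x : V → ℝ) (v : s) => x v) μ
        = Measure.pi (fun _ : s => volume.restrict (Set.Icc (0:ℝ) 1)))
    (ε : ℝ) (hε : 0 < ε) :
    ∃ f : (V → ℝ) → (V → Fin 4),
      Measurable f ∧
      (∀ (φ : G ≃g G) (x : V → ℝ) (v : V),
        f (fun u => x (φ.symm u)) v = f x (φ.symm v)) ∧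
      (∀ᵐ x ∂μ, ∀ u v : V, G.Adj u v → f x u ≠ f x v) ∧
      (∀ v : V, μ {x | f x v = 3} < ENNReal.ofReal ε) := by
  have h : T4.Good G μ := T4.good_of ⟨⟨hconn, hacyc⟩, hreg⟩ μ hμ
  obtain ⟨f, hf, hp, hs⟩ := T4.final h (ENNReal.ofReal ε) (ENNReal.ofReal_pos.2 hε)
    ENNReal.ofReal_ne_top
  refine ⟨f, hf.meas, fun φ x v => ?_, hp, hs⟩
  have := hf.eqv φ x (φ.symm v)
  rw [φ.apply_symm_apply] at this
  exact this
end

section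
/- For every ε > 0 there exists a measurable map f : X → Fin 4 such that for μ-a.e. x ∈ X one has f(s • x) ≠ f(x) for every s ∈ S, and μ({x : f(x) = 3}) < ε. (This is the Bernoulli-shift form of the existence of an fiid 4-coloring of T_4 with one color class of measure < ε.) -/
open MeasureTheory

namespace FC

abbrev Gam := FreeGroup (Fin 2)
abbrev Let := Fin 2 × Bool

open FreeGroup

def li (t : Let) : Let := (t.1, !t.2)

def gl (t : Let) : Gam := mk [t]

lemma gl_li (t : Let) : gl (li t) = (gl t)⁻¹ := by
  simp [gl, li, FreeGroup.inv_mk, FreeGroup.invRev]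

lemma mk_cons (t : Let) (L : List Let) : (mk (t :: L) : Gam) = gl t * mk L := by
  simp [gl]

lemma mk_inj {L L' : List Let} (h : IsReduced L) (h' : IsReduced L') (e : (mk L : Gam) = mk L') :
    L = L' := by
  have := reduce.sound e
  rwa [h.reduce_eq, h'.reduce_eq] at this

lemma gl_ne_one (t : Let) : gl t ≠ 1 := by
  intro h
  have := mk_inj (L := [t]) (L' := []) IsReduced.singleton IsReduced.nil h
  simp at this

lemma gl_inj {s t : Let} (h : gl s = gl t) : s = t := by
  have := mk_inj (L := [s]) (L' := [t]) IsReduced.singleton IsReduced.singleton h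
  simpa using this

lemma red_tail {s : Let} {L : List Let} (h : IsReduced (s :: L)) : IsReduced L :=
  h.infix (List.suffix_cons s L).isInfix

/-- a letter either extends a reduced word or cancels its head -/
lemma red_or (t : Let) {L : List Let} (h : IsReduced L) :
    IsReduced (t :: L) ∨ ∃ s L', L = s :: L' ∧ t = li s := by
  cases L with
  | nil => exact Or.inl IsReduced.singleton
  | cons s L' =>
    by_cases hst : t.1 = s.1 → t.2 = s.2
    · exact Or.inl (FreeGroup.isReduced_cons_cons.2 ⟨hst, h⟩)
    · right
      push Not at hst
      refine ⟨s, L', rfl, ?_⟩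
      rcases t with ⟨a, b⟩
      rcases s with ⟨a', b'⟩
      simp only [li] at *
      rcases hst with ⟨rfl, h2⟩
      cases b <;> cases b' <;> simp_all

def Pr (c : Gam → Fin 5) : Prop := ∀ (t : Let) (g : Gam), c (gl t * g) = c g → c g = 4

def Qv (Q : Finset (Fin 5)) (c : Gam → Fin 5) : Prop := ∀ g, c g = 4 ∨ c g ∈ Q

def Sl (c : Gam → Fin 5) : List Let → Prop
  | [] => c 1 = 4
  | s :: L => Sl c L ∧ IsReduced (s :: L) ∧ c (mk (s :: L)) ≠ 4 ∧
      ∀ t, t ≠ s → IsReduced (t :: L) → c (mk (t :: L)) ≠ c (mk (s :: L))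

lemma Sl.red {c : Gam → Fin 5} {L : List Let} (h : Sl c L) : IsReduced L := by
  cases L with
  | nil => exact IsReduced.nil
  | cons s L => exact h.2.1

lemma Sl.root {c : Gam → Fin 5} {L : List Let} (h : Sl c L) : c 1 = 4 := by
  induction L with
  | nil => exact h
  | cons s L ih => exact ih h.1

lemma Pr.update {c : Gam → Fin 5} (hc : Pr c) (v : Gam) (k : Fin 5)
    (hk : k = 4 ∨ ∀ t, c (gl t * v) ≠ k) : Pr (Function.update c v k) := by
  intro t g
  by_cases h1 : g = v
  · subst h1
    have h2 : gl t * g ≠ g := fun h => gl_ne_one t (by simpa using h)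
    rw [Function.update_of_ne h2, Function.update_self]
    rcases hk with hk | hk
    · intro _; exact hk
    · intro h; exact absurd h (hk t)
  · by_cases h2 : gl t * g = v
    · rw [h2, Function.update_self, Function.update_of_ne h1]
      intro h
      rcases hk with hk | hk
      · rw [← h, hk]
      · have := hk (li t)
        rw [gl_li, ← h2, inv_mul_cancel_left] at this
        exact absurd h.symm this
    · rw [Function.update_of_ne h2, Function.update_of_ne h1]
      exact hc t g

lemma Qv.update {Q : Finset (Fin 5)} {c : Gam → Fin 5} (hc : Qv Q c) (v : Gam) (k : Fin 5)
    (hk : k = 4 ∨ k ∈ Q) : Qv Q (Function.update c v k) := by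
  intro g
  by_cases h1 : g = v
  · subst h1; simpa using hk
  · rw [Function.update_of_ne h1]; exact hc g

lemma not_suffix_mk {L L' : List Let} (hL : IsReduced L) (t : Let) (ht : IsReduced (t :: L))
    (hs : L' <:+ L) : (mk (t :: L) : Gam) ≠ mk L' := by
  intro e
  have h1 := mk_inj ht (hL.infix hs.isInfix) e
  have h2 := hs.length_le
  rw [← h1] at h2
  simp at h2

/-- neighbours of the current token position -/
lemma nbr_cond {c c0 : Gam → Fin 5} {L : List Let} (hL : IsReduced L) (k : Fin 5)
    (hoff : ∀ g, (∀ L', L' <:+ L → g ≠ mk L') → c0 g = c g)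
    (hback : ∀ s L', L = s :: L' → c0 (mk L') = c (mk L))
    (hk1 : ∀ s L', L = s :: L' → c (mk L) ≠ k) (t : Let)
    (hk2 : IsReduced (t :: L) → c (mk (t :: L)) ≠ k) :
    c0 (gl t * mk L) ≠ k := by
  rcases red_or t hL with h | ⟨s, L', h1, h2⟩
  · rw [← mk_cons, hoff _ (fun L' h' => not_suffix_mk hL t h h')]
    exact hk2 h
  · have : gl t * mk L = mk L' := by rw [h2, h1, mk_cons, gl_li, inv_mul_cancel_left]
    rw [this, hback s L' h1]
    exact hk1 s L' h1

lemma slide {Q : Finset (Fin 5)} {c : Gam → Fin 5} (hc : Pr c) (hQ : Qv Q c) {L : List Let}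
    (hL : Sl c L) : ∃ c0, Pr c0 ∧ Qv Q c0 ∧ (∀ g, c0 g = 4 ↔ (c g = 4 ∧ g ≠ 1) ∨ g = mk L) ∧
      (∀ g, (∀ L', L' <:+ L → g ≠ mk L') → c0 g = c g) ∧
      (∀ s L', L = s :: L' → c0 (mk L') = c (mk L)) := by
  induction L with
  | nil =>
    refine ⟨c, hc, hQ, ?_, fun _ _ => rfl, by simp⟩
    intro g
    by_cases h : g = 1
    · subst h; exact ⟨fun _ => Or.inr rfl, fun _ => hL⟩
    · have : ¬ g = mk [] := h
      simp [h, this]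
  | cons s L ih =>
    obtain ⟨h0, hr, hw, hu⟩ := hL
    obtain ⟨c0, p1, p2, p3, p4, p5⟩ := ih h0
    have hLr := h0.red
    have hwv : (mk (s :: L) : Gam) ≠ mk L := not_suffix_mk hLr s hr (List.suffix_refl L)
    have hcw : c0 (mk (s :: L)) = c (mk (s :: L)) :=
      p4 _ (fun L' h' => not_suffix_mk hLr s hr h')
    set w : Gam := mk (s :: L) with hwdef
    refine ⟨Function.update (Function.update c0 w 4) (mk L) (c w), ?_, ?_, ?_, ?_, ?_⟩
    · apply Pr.update (p1.update w 4 (Or.inl rfl))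
      right
      intro t
      by_cases hts : t = s
      · subst hts
        rw [← mk_cons, ← hwdef, Function.update_self]
        exact hw.symm
      · have hne : gl t * mk L ≠ w := by
          rw [hwdef, mk_cons]
          intro h; exact hts (gl_inj (mul_right_cancel h))
        rw [Function.update_of_ne hne]
        refine nbr_cond hLr (c w) p4 p5 ?_ t (fun h => hu t hts h)
        intro _ _ _ h
        apply hw
        rw [← h]
        apply hc s
        rw [← mk_cons, ← hwdef, h]
    · exact (p2.update w 4 (Or.inl rfl)).update _ _ (hQ w)
    · intro g
      by_cases h1 : g = mk L
      · subst h1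
        rw [Function.update_self]
        constructor
        · intro h; exact absurd h hw
        · rintro (⟨h2, h3⟩ | h2)
          · exfalso
            cases L with
            | nil => exact h3 rfl
            | cons a b => exact h0.2.2.1 h2
          · exact absurd h2.symm hwv
      · rw [Function.update_of_ne h1]
        by_cases h2 : g = w
        · subst h2; simp
        · rw [Function.update_of_ne h2, p3]
          simp [h1, h2]
    · intro g hg
      have h1 : g ≠ mk L := hg L (List.suffix_cons s L)
      have h2 : g ≠ w := hg _ (List.suffix_refl _)
      rw [Function.update_of_ne h1, Function.update_of_ne h2]
      exact p4 g (fun L' h' => hg L' (h'.trans (List.suffix_cons s L)))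
    · intro s' L' h
      simp only [List.cons.injEq] at h
      rw [← h.2, Function.update_self]

lemma fixl {Q : Finset (Fin 5)} {c : Gam → Fin 5} (hc : Pr c) (hQ : Qv Q c) {L : List Let}
    (hL : Sl c L) (k : Fin 5) (hk : k ∈ Q) (hk4 : k ≠ 4)
    (hk1 : ∀ s L', L = s :: L' → c (mk L) ≠ k)
    (hk2 : ∀ t, IsReduced (t :: L) → c (mk (t :: L)) ≠ k) :
    ∃ c', Pr c' ∧ Qv Q c' ∧ (∀ g, c' g = 4 ↔ (c g = 4 ∧ g ≠ 1)) ∧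
      (∀ g, (∀ L', L' <:+ L → g ≠ mk L') → c' g = c g) := by
  obtain ⟨c0, p1, p2, p3, p4, p5⟩ := slide hc hQ hL
  refine ⟨Function.update c0 (mk L) k, ?_, p2.update _ _ (Or.inr hk), ?_, ?_⟩
  · exact p1.update _ _ (Or.inr fun t => nbr_cond hL.red k p4 p5 hk1 t (hk2 t))
  · intro g
    by_cases h1 : g = mk L
    · subst h1
      rw [Function.update_self]
      constructor
      · intro h; exact absurd h hk4
      · rintro ⟨h2, h3⟩
        exfalso
        cases L with
        | nil => exact h3 rfl
        | cons a b => exact hL.2.2.1 h2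
    · rw [Function.update_of_ne h1, p3]
      simp [h1]
  · intro g hg
    rw [Function.update_of_ne (hg L (List.suffix_refl L))]
    exact p4 g hg

lemma sl_congr {c c' : Gam → Fin 5} {L : List Let} (h : Sl c L) (h1 : c' 1 = c 1)
    (h2 : ∀ L1 t, L1 <:+ L → L1 ≠ L → IsReduced (t :: L1) → c' (mk (t :: L1)) = c (mk (t :: L1))) :
    Sl c' L := by
  induction L with
  | nil => exact h1.trans h
  | cons s L ih =>
    obtain ⟨h0, hr, hw, hu⟩ := h
    have e : ∀ t, IsReduced (t :: L) → c' (mk (t :: L)) = c (mk (t :: L)) := fun t ht =>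
      h2 L t (List.suffix_cons s L) (by simp) ht
    refine ⟨ih h0 ?_, hr, ?_, ?_⟩
    · intro L1 t hs hne ht
      apply h2 L1 t (hs.trans (List.suffix_cons s L)) _ ht
      intro h; subst h
      have := hs.length_le
      simp at this
    · rw [e s hr]; exact hw
    · intro t hts ht
      rw [e t ht, e s hr]; exact hu t hts ht


lemma li_li (t : Let) : li (li t) = t := by simp [li]

lemma red_invRev {L : List Let} (h : IsReduced L) : IsReduced (invRev L) := by
  rw [isReduced_iff_reduce_eq] at *
  rw [reduce_invRev, h]

/-- words with different first letters -/
lemma word_aux {s s' : Let} {P Q : List Let} (hP : IsReduced (s :: P)) (hQ : IsReduced (s' :: Q))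
    (hs : s ≠ s') (t : Let) : (mk (s' :: Q) : Gam) * gl t ≠ mk (s :: P) := by
  intro e
  have h1 : (mk (invRev (s :: P) ++ (s' :: Q)) : Gam) = mk [li t] := by
    rw [← FreeGroup.mul_mk, ← FreeGroup.inv_mk, ← e]
    change _ = gl (li t)
    rw [gl_li]; group
  have h2 : invRev (s :: P) = invRev P ++ [li s] := by simp [invRev, li]
  have h3 : IsReduced (invRev (s :: P) ++ (s' :: Q)) := by
    rw [h2]
    apply IsReduced.append_overlap
    · rw [← h2]; exact red_invRev hP
    · rcases red_or (li s) hQ with h | ⟨a, b, h, h'⟩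
      · exact h
      · simp only [List.cons.injEq] at h
        exfalso; apply hs
        rw [← li_li s, h', li_li, h.1]
    · simp
  have h4 := mk_inj h3 IsReduced.singleton h1
  have := congrArg List.length h4
  simp at this
  omega

lemma Pr.shift {c : Gam → Fin 5} (h : Pr c) (v : Gam) : Pr (fun g => c (g * v)) := by
  intro t g
  simp only [mul_assoc]
  exact h t _

lemma merge {Q : Finset (Fin 5)} {c : Gam → Fin 5} (hc : Pr c) (hQ : Qv Q c) {s s' : Let}
    {L L' : List Let} {v : Gam}
    (hL : Sl c (s :: L)) (hL' : Sl (fun g => c (g * v)) (s' :: L')) (hs : s ≠ s')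
    (e : (mk (s :: L) : Gam) = mk (s' :: L') * v) :
    ∃ c', Pr c' ∧ Qv Q c' ∧
      (∀ g, c' g = 4 ↔ (c g = 4 ∧ g ≠ 1 ∧ g ≠ v) ∨ g = mk (s :: L)) ∧
      (∀ g, (∀ L1, L1 <:+ L → g ≠ mk L1) → (∀ L1, L1 <:+ s' :: L' → g ≠ mk L1 * v) →
        c' g = c g) := by
  obtain ⟨d, p1, p2, p3, p4, p5⟩ := slide (hc.shift v) (fun g => hQ (g * v)) hL'
  set c3 : Gam → Fin 5 := fun g => d (g * v⁻¹) with hc3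
  have q1 : Pr c3 := p1.shift v⁻¹
  have q2 : Qv Q c3 := fun g => p2 (g * v⁻¹)
  have q3 : ∀ g, c3 g = 4 ↔ (c g = 4 ∧ g ≠ v) ∨ g = mk (s :: L) := by
    intro g
    simp only [hc3, p3, e, inv_mul_cancel_right, mul_inv_eq_iff_eq_mul, ne_eq, one_mul]
  have q4 : ∀ g, (∀ L1, L1 <:+ s' :: L' → g ≠ mk L1 * v) → c3 g = c g := by
    intro g hg
    simp only [hc3]
    rw [p4 (g * v⁻¹)]
    · simp
    · intro L1 h1 h2
      apply hg L1 h1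
      rw [← h2]; simp
  have hr := hL.red
  have hr' := hL'.red
  have hv' : v = (mk (s' :: L') : Gam)⁻¹ * mk (s :: L) := by rw [e]; group
  -- disjointness
  have key : ∀ L1 t, L1 <:+ L → IsReduced (t :: L1) → t :: L1 ≠ s :: L →
      c3 (mk (t :: L1)) = c (mk (t :: L1)) := by
    intro L1 t h1 ht hne
    apply q4
    intro L2 h2 h3
    obtain ⟨P, hP⟩ := h1
    obtain ⟨R, hR⟩ := h2
    have hP' : (mk (s :: L) : Gam) = mk (s :: P) * mk L1 := by
      rw [FreeGroup.mul_mk, ← hP]; rfl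
    have hR' : (mk (s' :: L') : Gam) = mk R * mk L2 := by
      rw [FreeGroup.mul_mk, ← hR]
    have h4 : (mk R : Gam) * gl t = mk (s :: P) := by
      rw [mk_cons, hv', hP', hR'] at h3
      have : gl t = (mk R)⁻¹ * mk (s :: P) := by
        apply mul_right_cancel (b := mk L1)
        rw [h3]; group
      rw [this]; group
    have hPr : IsReduced (s :: P) := hr.infix ⟨[], L1, by simp [hP]⟩
    cases R with
    | nil =>
      have h5 : (mk [t] : Gam) = mk (s :: P) := by
        rw [← h4]; simp [gl]
      have h6 := mk_inj IsReduced.singleton hPr h5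
      simp only [List.cons.injEq] at h6
      apply hne
      rw [← hP, ← h6.2, h6.1]; simp
    | cons a R =>
      simp only [List.cons_append, List.cons.injEq] at hR
      rw [hR.1] at h4
      have hRr : IsReduced (s' :: R) := hr'.infix ⟨[], L2, by simp [hR.2]⟩
      exact word_aux hPr hRr hs t h4
  have root : c3 1 = c 1 := by
    apply q4
    intro L2 h2 h3
    obtain ⟨R, hR⟩ := h2
    have hR' : (mk (s' :: L') : Gam) = mk R * mk L2 := by
      rw [FreeGroup.mul_mk, ← hR]
    have h4 : (mk R : Gam) = mk (s :: L) := by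
      rw [hv', hR'] at h3
      have : (1 : Gam) = (mk R)⁻¹ * mk (s :: L) := by rw [h3]; group
      exact (inv_mul_eq_one.1 this.symm)
    cases R with
    | nil =>
      have := mk_inj IsReduced.nil hr h4
      simp at this
    | cons a R =>
      simp only [List.cons_append, List.cons.injEq] at hR
      have := mk_inj (hr'.infix ⟨[], L2, by simp [hR]⟩) hr h4
      simp only [List.cons.injEq] at this
      exact hs (this.1.symm.trans hR.1)
  have hlen : ∀ {L1 : List Let} {t : Let}, L1 <:+ L → L1 ≠ L → t :: L1 ≠ s :: L := by
    intro L1 t _ h h'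
    simp only [List.cons.injEq] at h'
    exact h h'.2
  have hSl : Sl c3 L := by
    apply sl_congr hL.1 root
    intro L1 t h1 h2 h3
    exact key L1 t h1 h3 (hlen h1 h2)
  have hk4 := hL.2.2.1
  obtain ⟨c', r1, r2, r3, r4⟩ := fixl q1 q2 hSl (c (mk (s :: L))) ((hQ _).resolve_left hk4) hk4
    (by
      intro a b hab
      have : c3 (mk L) = c (mk L) := by
        rw [hab]; apply key
        · rw [hab]; exact List.suffix_cons a b
        · rw [← hab]; exact hL.1.red
        · intro h
          have := congrArg List.length h
          rw [hab] at this
          simp at this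
      rw [this]
      intro h
      apply hk4
      rw [← h]
      apply hc s
      rw [← mk_cons, h])
    (by
      intro t ht
      by_cases hts : t = s
      · rw [hts, (q3 _).2 (Or.inr rfl)]
        exact hk4.symm
      · rw [key L t (List.suffix_refl L) ht (by simp [hts])]
        exact hL.2.2.2 t hts ht)
  refine ⟨c', r1, r2, ?_, ?_⟩
  · intro g
    rw [r3, q3]
    have hz : (mk (s :: L) : Gam) ≠ 1 := by
      intro h
      have := mk_inj hr IsReduced.nil h
      simp at this
    constructor
    · rintro ⟨h1 | h1, h2⟩
      · exact Or.inl ⟨h1.1, h2, h1.2⟩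
      · exact Or.inr h1
    · rintro (⟨h1, h2, h3⟩ | h1)
      · exact ⟨Or.inl ⟨h1, h3⟩, h2⟩
      · exact ⟨Or.inr h1, h1 ▸ hz⟩
  · intro g h1 h2
    rw [r4 g h1, q4 g h2]

/-- bounded improvement -/
def Imp (Q : Finset (Fin 5)) (n k : ℕ) (c : Gam → Fin 5) : Prop :=
  ∃ c', Pr c' ∧ Qv Q c' ∧ ∃ D : Finset Gam, D.card ≤ k ∧ (∀ g ∈ D, g.norm ≤ n) ∧
    (∀ g, g ∉ D → c' g = c g) ∧ (D.filter (fun g => c' g = 4)).card < (D.filter (fun g => c g = 4)).card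

def sufs (L : List Let) : Finset Gam := (L.tails.map (fun l => (mk l : Gam))).toFinset

lemma mem_sufs {L : List Let} {g : Gam} : g ∈ sufs L ↔ ∃ L', L' <:+ L ∧ g = mk L' := by
  simp [sufs, eq_comm]

lemma card_sufs (L : List Let) : (sufs L).card ≤ L.length + 1 := by
  refine (List.toFinset_card_le _).trans ?_
  simp

lemma norm_sufs {L : List Let} {g : Gam} (h : g ∈ sufs L) : g.norm ≤ L.length := by
  obtain ⟨L', h1, rfl⟩ := mem_sufs.1 h
  exact FreeGroup.norm_mk_le.trans h1.length_le

lemma imp_fix {Q : Finset (Fin 5)} {c : Gam → Fin 5} (hc : Pr c) (hQ : Qv Q c) {L : List Let} {R : ℕ}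
    (hR : L.length ≤ R)
    (hL : Sl c L) (k : Fin 5) (hk : k ∈ Q) (hk4 : k ≠ 4)
    (hk1 : ∀ s L', L = s :: L' → c (mk L) ≠ k)
    (hk2 : ∀ t, IsReduced (t :: L) → c (mk (t :: L)) ≠ k) :
    Imp Q (3 * R) (2 * R + 2) c := by
  obtain ⟨c', r1, r2, r3, r4⟩ := fixl hc hQ hL k hk hk4 hk1 hk2
  refine ⟨c', r1, r2, sufs L, (card_sufs L).trans (by omega), fun g hg => (norm_sufs hg).trans (by omega),
    ?_, ?_⟩
  · intro g hg
    apply r4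
    intro L' h1 h2
    exact hg (mem_sufs.2 ⟨L', h1, h2⟩)
  · apply Finset.card_lt_card
    rw [Finset.ssubset_iff_of_subset]
    · refine ⟨1, ?_, ?_⟩
      · rw [Finset.mem_filter]
        exact ⟨mem_sufs.2 ⟨[], List.nil_suffix, rfl⟩, hL.root⟩
      · simp [r3]
    · intro g
      simp only [Finset.mem_filter, r3]
      tauto

lemma imp_merge {Q : Finset (Fin 5)} {c : Gam → Fin 5} (hc : Pr c) (hQ : Qv Q c) {R : ℕ}
    {v : Gam} (hv : v ≠ 1) (L : List Let) : ∀ (L' : List Let) (_ : L.length ≤ R) (_ : L'.length ≤ R)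
    (_ : Sl c L) (_ : Sl (fun g => c (g * v)) L')
    (_ : (mk L : Gam) = mk L' * v), Imp Q (3 * R) (2 * R + 2) c := by
  induction L with
  | nil =>
    intro L' _ _ h1 h2 e
    exfalso
    cases L' with
    | nil =>
      apply hv
      have : (1 : Gam) = 1 * v := e
      simpa using this.symm
    | cons a b =>
      apply h2.2.2.1
      simp only
      rw [← e]
      exact h1
  | cons s L ih =>
    intro L' hl hl' h1 h2 e
    cases L' with
    | nil =>
      exfalso
      apply h1.2.2.1
      rw [e]
      exact h2
    | cons s' L' =>
      by_cases hs : s = s'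
      · subst hs
        refine ih L' ?_ ?_ h1.1 h2.1 ?_
        · simp at hl; omega
        · simp at hl'; omega
        · rw [mk_cons, mk_cons, mul_assoc] at e
          exact mul_left_cancel e
      · obtain ⟨c', r1, r2, r3, r4⟩ := merge hc hQ h1 h2 hs e
        have hl1 : L.length + 1 ≤ R := by simpa using hl
        have hl2 : L'.length + 1 ≤ R := by simpa using hl'
        refine ⟨c', r1, r2, sufs L ∪ (sufs (s' :: L')).image (fun g => g * v), ?_, ?_, ?_, ?_⟩
        · refine (Finset.card_union_le _ _).trans ?_
          have h3 := card_sufs L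
          have h4 := (Finset.card_image_le (s := sufs (s' :: L')) (f := fun g => g * v)).trans
            (card_sufs (s' :: L'))
          simp only [List.length_cons] at h4
          omega
        · intro g hg
          rcases Finset.mem_union.1 hg with h | h
          · exact (norm_sufs h).trans (by omega)
          · obtain ⟨g', h3, rfl⟩ := Finset.mem_image.1 h
            have h4 : v = (mk (s' :: L') : Gam)⁻¹ * mk (s :: L) := by rw [e]; group
            have h5 : v.norm ≤ (L'.length + 1) + (L.length + 1) := by
              rw [h4]
              refine (FreeGroup.norm_mul_le _ _).trans ?_
              rw [FreeGroup.norm_inv_eq]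
              exact add_le_add (FreeGroup.norm_mk_le) (FreeGroup.norm_mk_le)
            have h6 := FreeGroup.norm_mul_le g' v
            have h7 := norm_sufs h3
            simp only [List.length_cons] at h7
            omega
        · intro g hg
          simp only [Finset.mem_union, not_or, Finset.mem_image, not_exists, not_and] at hg
          apply r4
          · intro L1 h3 h4
            exact hg.1 (mem_sufs.2 ⟨L1, h3, h4⟩)
          · intro L1 h3 h4
            exact hg.2 (mk L1) (mem_sufs.2 ⟨L1, h3, rfl⟩) h4.symm
        · set D := sufs L ∪ (sufs (s' :: L')).image (fun g => g * v)
          have m1 : (1 : Gam) ∈ D.filter (fun g => c g = 4) := by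
            rw [Finset.mem_filter]
            exact ⟨Finset.mem_union_left _ (mem_sufs.2 ⟨[], List.nil_suffix, rfl⟩), h1.root⟩
          have m2 : v ∈ D.filter (fun g => c g = 4) := by
            rw [Finset.mem_filter]
            refine ⟨Finset.mem_union_right _ (Finset.mem_image.2
              ⟨1, mem_sufs.2 ⟨[], List.nil_suffix, rfl⟩, by simp⟩), ?_⟩
            have := h2.root
            simpa using this
          have m3 : D.filter (fun g => c' g = 4) ⊆
              insert (mk (s :: L)) (((D.filter (fun g => c g = 4)).erase 1).erase v) := by
            intro g
            simp only [Finset.mem_filter, r3, Finset.mem_insert, Finset.mem_erase]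
            tauto
          have m4 := (Finset.card_le_card m3).trans (Finset.card_insert_le _ _)
          rw [Finset.card_erase_of_mem (Finset.mem_erase.2 ⟨hv, m2⟩), Finset.card_erase_of_mem m1] at m4
          have m5 : 2 ≤ (D.filter (fun g => c g = 4)).card := by
            rw [← Finset.card_pair hv]
            apply Finset.card_le_card
            intro g hg
            simp only [Finset.mem_insert, Finset.mem_singleton] at hg
            rcases hg with rfl | rfl
            · exact m2
            · exact m1
          omega
end FC

namespace FC
open FreeGroup

lemma count_unique {α β : Type*} [DecidableEq α] [DecidableEq β] (N : Finset α) (φ : α → β)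
    (Q : Finset β) (h : ∀ k ∈ Q, ∃ t ∈ N, φ t = k) (U : Finset α)
    (hU : ∀ s ∈ N, φ s ∈ Q → (∀ t ∈ N, t ≠ s → φ t ≠ φ s) → s ∈ U) :
    2 * Q.card ≤ N.card + U.card := by
  have h1 : (N.filter (fun s => φ s ∈ Q)).card = ∑ k ∈ Q, ((N.filter (fun s => φ s ∈ Q)).filter (fun s => φ s = k)).card :=
    Finset.card_eq_sum_card_fiberwise (fun s hs => by simpa using (Finset.mem_filter.1 hs).2)
  have h2 : (U.filter (fun s => φ s ∈ Q)).card = ∑ k ∈ Q, ((U.filter (fun s => φ s ∈ Q)).filter (fun s => φ s = k)).card :=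
    Finset.card_eq_sum_card_fiberwise (fun s hs => by simpa using (Finset.mem_filter.1 hs).2)
  have h3 := Finset.card_filter_le N (fun s => φ s ∈ Q)
  have h4 := Finset.card_filter_le U (fun s => φ s ∈ Q)
  have h5 : 2 * Q.card ≤ ∑ k ∈ Q, (((N.filter (fun s => φ s ∈ Q)).filter (fun s => φ s = k)).card +
      ((U.filter (fun s => φ s ∈ Q)).filter (fun s => φ s = k)).card) := by
    rw [mul_comm, ← smul_eq_mul]
    apply Finset.card_nsmul_le_sum
    intro k hk
    obtain ⟨t, ht, rfl⟩ := h k hk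
    have m1 : t ∈ (N.filter (fun s => φ s ∈ Q)).filter (fun s => φ s = φ t) := by
      simp [ht, hk]
    by_cases hu : ∀ s ∈ N, s ≠ t → φ s ≠ φ t
    · have m2 : t ∈ (U.filter (fun s => φ s ∈ Q)).filter (fun s => φ s = φ t) := by
        simp [hU t ht hk hu, hk]
      have := Finset.card_pos.2 ⟨t, m1⟩
      have := Finset.card_pos.2 ⟨t, m2⟩
      omega
    · push Not at hu
      obtain ⟨s, hs, hst, hφ⟩ := hu
      have m3 : s ∈ (N.filter (fun s => φ s ∈ Q)).filter (fun s => φ s = φ t) := by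
        simp [hs, hk, hφ]
      have := Finset.one_lt_card.2 ⟨s, m3, t, m1, hst⟩
      omega
  rw [Finset.sum_add_distrib, ← h1, ← h2] at h5
  omega

open Classical in
lemma card_ext {Q : Finset (Fin 5)} {c : Gam → Fin 5} (hc : Pr c) (hQ : Qv Q c) (h4 : 4 ∉ Q) {R : ℕ}
    (hI : ¬ Imp Q (3 * R) (2 * R + 2) c) {L : List Let} (hl : L.length ≤ R) (hL : Sl c L) :
    2 * Q.card - 5 ≤ (Finset.univ.filter (fun t : Let => Sl c (t :: L))).card := by
  set N : Finset Let := Finset.univ.filter (fun t => IsReduced (t :: L)) with hN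
  set U := (Finset.univ.filter (fun t : Let => Sl c (t :: L)))
  have hNm : ∀ t, t ∈ N ↔ IsReduced (t :: L) := by simp [hN]
  have hU' : ∀ s ∈ N, c (mk (s :: L)) ∈ Q →
      (∀ t ∈ N, t ≠ s → c (mk (t :: L)) ≠ c (mk (s :: L))) → s ∈ U := by
    intro s hs hsQ hu
    rw [Finset.mem_filter]
    refine ⟨Finset.mem_univ _, hL, (hNm s).1 hs, ?_, fun t hts ht => hu t ((hNm t).2 ht) hts⟩
    intro h; rw [h] at hsQ; exact h4 hsQ
  have cN : N.card ≤ 4 := (Finset.card_le_univ N).trans (by simp)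
  cases hLc : L with
  | nil =>
    have := count_unique N (fun t => c (mk (t :: L))) Q (by
      intro k hk
      by_contra hcon
      push Not at hcon
      apply hI
      refine imp_fix hc hQ hl hL k hk (fun h => h4 (h ▸ hk)) (by simp [hLc]) ?_
      intro t ht
      exact hcon t ((hNm t).2 ht)) U (fun s hs hsQ hu => hU' s hs hsQ hu)
    omega
  | cons a M =>
    have hne4 : c (mk L) ≠ 4 := by
      rw [hLc] at hL ⊢; exact hL.2.2.1
    have hcQ : c (mk L) ∈ Q := (hQ _).resolve_left hne4
    have := count_unique N (fun t => c (mk (t :: L))) (Q.erase (c (mk L))) (by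
      intro k hk
      rw [Finset.mem_erase] at hk
      by_contra hcon
      push Not at hcon
      apply hI
      refine imp_fix hc hQ hl hL k hk.2 (fun h => h4 (h ▸ hk.2)) (fun _ _ _ => hk.1.symm) ?_
      intro t ht
      exact hcon t ((hNm t).2 ht)) U (fun s hs hsQ hu => hU' s hs (Finset.mem_of_mem_erase hsQ) hu)
    rw [Finset.card_erase_of_mem hcQ] at this
    have cN' : N.card < 4 := by
      have : N ⊂ Finset.univ := by
        rw [Finset.ssubset_univ_iff]
        intro h
        have h1 : li a ∈ N := h ▸ Finset.mem_univ _
        rw [hNm, hLc, isReduced_cons_cons] at h1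
        have := h1.1 rfl
        simp [li] at this
      have := Finset.card_lt_card this
      simpa using this
    omega

open Classical in
lemma card_level {Q : Finset (Fin 5)} {c : Gam → Fin 5} (hc : Pr c) (hQ : Qv Q c) (h4 : 4 ∉ Q) {R : ℕ}
    (hI : ¬ Imp Q (3 * R) (2 * R + 2) c) (h1 : c 1 = 4) (n : ℕ) (hn : n ≤ R) :
    (2 * Q.card - 5) ^ n ≤ ((List.finite_length_eq Let n).toFinset.filter (Sl c)).card := by
  induction n with
  | zero =>
    rw [pow_zero, Nat.one_le_iff_ne_zero, ← Nat.pos_iff_ne_zero]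
    apply Finset.card_pos.2
    exact ⟨[], by simp [Sl, h1]⟩
  | succ n ih =>
    have ih := ih (by omega)
    have := Finset.card_eq_sum_card_fiberwise (s := (List.finite_length_eq Let (n+1)).toFinset.filter (Sl c))
      (t := (List.finite_length_eq Let n).toFinset.filter (Sl c)) (f := List.tail) (by
        intro L hL
        simp only [Finset.coe_filter, Set.Finite.mem_toFinset, Set.mem_ofPred_eq] at hL ⊢
        rcases L with _ | ⟨a, L⟩
        · simp at hL
        · exact ⟨by simpa using hL.1, hL.2.1⟩)
    rw [this, pow_succ]
    refine le_trans (Nat.mul_le_mul_right _ ih) ?_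
    rw [← smul_eq_mul]
    apply Finset.card_nsmul_le_sum
    intro L hL
    simp only [Finset.mem_filter, Set.Finite.mem_toFinset, Set.mem_ofPred_eq] at hL
    refine (card_ext hc hQ h4 hI (L := L) (by omega) hL.2).trans ?_
    apply Finset.card_le_card_of_injOn (fun t => t :: L)
    · intro t ht
      simp only [Finset.coe_filter, Finset.mem_univ, true_and, Set.mem_ofPred_eq] at ht
      simp [ht, hL.1]
    · intro t _ t' _ h
      simpa using h

noncomputable def LL (R : ℕ) : Finset (List Let) := (List.finite_length_le Let R).toFinset

lemma mem_LL {R : ℕ} {L : List Let} : L ∈ LL R ↔ L.length ≤ R := by simp [LL]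

open Classical in
lemma card_total {Q : Finset (Fin 5)} {c : Gam → Fin 5} (hc : Pr c) (hQ : Qv Q c) (h4 : 4 ∉ Q) {R : ℕ}
    (hI : ¬ Imp Q (3 * R) (2 * R + 2) c) (h1 : c 1 = 4) :
    ∑ n ∈ Finset.range (R + 1), (2 * Q.card - 5) ^ n ≤ ((LL R).filter (Sl c)).card := by
  have := Finset.card_eq_sum_card_fiberwise (s := (LL R).filter (Sl c))
      (t := Finset.range (R + 1)) (f := List.length) (by
        intro L hL
        simp only [Finset.coe_filter, mem_LL, Set.mem_ofPred_eq] at hL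
        simp only [Finset.coe_range, Set.mem_Iio]
        omega)
  rw [this]
  apply Finset.sum_le_sum
  intro n hn
  rw [Finset.mem_range] at hn
  refine (card_level hc hQ h4 hI h1 n (by omega)).trans ?_
  apply Finset.card_le_card
  intro L hL
  simp only [Finset.mem_filter, Set.Finite.mem_toFinset, Set.mem_ofPred_eq, mem_LL] at hL ⊢
  exact ⟨⟨by omega, hL.2⟩, hL.1⟩

end FC

namespace FC
open FreeGroup

section dyn
variable {X : Type*} [MeasurableSpace X]

lemma mp_eq {f g : X → Fin 5} (hf : Measurable f) (hg : Measurable g) : Measurable fun x => f x = g x :=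
  measurableSet_setOfPred.1 (measurableSet_eq_fun hf hg)

lemma meas_Pr {c : X → Gam → Fin 5} (hc : ∀ g, Measurable fun x => c x g) :
    MeasurableSet {x | Pr (c x)} := by
  apply measurableSet_setOfPred.2
  exact Measurable.forall fun t => Measurable.forall fun g =>
    (mp_eq (hc _) (hc _)).imp (mp_eq (hc _) measurable_const)

variable [MulAction Gam X]

def col (f : X → Fin 5) (x : X) : Gam → Fin 5 := fun g => f (g • x)

def Good (Q : Finset (Fin 5)) (f : X → Fin 5) : Prop :=
  Measurable f ∧ ∀ x, Pr (col f x) ∧ Qv Q (col f x)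

variable [MeasurableConstSMul Gam X]

lemma meas_col {f : X → Fin 5} (hf : Measurable f) (g : Gam) : Measurable (fun x => col f x g) :=
  hf.comp (measurable_const_smul g)

lemma meas_Sl {f : X → Fin 5} (hf : Measurable f) (L : List Let) :
    Measurable (fun x => Sl (col f x) L) := by
  induction L with
  | nil => exact mp_eq (meas_col hf 1) measurable_const
  | cons s L ih =>
    exact ih.and (measurable_const.and ((mp_eq (meas_col hf _) measurable_const).not.and
      (Measurable.forall fun t => measurable_const.imp (measurable_const.imp
        (mp_eq (meas_col hf _) (meas_col hf _)).not))))

variable (μ : Measure X) [IsProbabilityMeasure μ] [SMulInvariantMeasure Gam X μ]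

lemma transport {Q : Finset (Fin 5)} (h4 : 4 ∉ Q) {f : X → Fin 5} (hf : Good Q f) (R : ℕ) {A : Set X}
    (hA : MeasurableSet A) (hAI : ∀ x, Imp Q (3 * R) (2 * R + 2) (col f x) → x ∈ A) :
    ((∑ n ∈ Finset.range (R + 1), (2 * Q.card - 5) ^ n : ℕ) : ENNReal) * μ ({x | f x = 4} \ A) ≤ 1 := by
  classical
  set N := ∑ n ∈ Finset.range (R + 1), (2 * Q.card - 5) ^ n
  set T := {x | f x = 4} \ A with hT
  have hTm : MeasurableSet T := (measurableSet_eq_fun hf.1 measurable_const).diff hA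
  let S : List Let → Set X := fun L => T ∩ {x | Sl (col f x) L}
  have hSm : ∀ L, MeasurableSet (S L) := fun L => hTm.inter (measurableSet_setOfPred.2 (meas_Sl hf.1 L))
  have h1 : ∑ L ∈ LL R, μ (S L) ≤ 1 := by
    have e : ∀ L ∈ LL R, μ (S L) = μ ((fun z => (mk L : Gam)⁻¹ • z) ⁻¹' (S L)) := by
      intro L _
      rw [measure_preimage_smul]
    rw [Finset.sum_congr rfl e, ← measure_biUnion_finset]
    · exact prob_le_one
    · intro L hL L' hL' hne
      rw [Function.onFun, Set.disjoint_left]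
      intro z hz hz'
      have hz1 : (mk L : Gam)⁻¹ • z ∈ S L := hz
      have hz2 : (mk L' : Gam)⁻¹ • z ∈ S L' := hz'
      obtain ⟨⟨_, p1⟩, p2⟩ := hz1
      obtain ⟨⟨_, q1⟩, q2⟩ := hz2
      have p2 : Sl (col f ((mk L : Gam)⁻¹ • z)) L := p2
      have q2 : Sl (col f ((mk L' : Gam)⁻¹ • z)) L' := q2
      apply p1
      apply hAI
      rw [Finset.mem_coe, mem_LL] at hL hL'
      have hv : (mk L' : Gam)⁻¹ * mk L ≠ 1 := by
        intro h
        apply hne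
        exact (mk_inj q2.red p2.red (inv_mul_eq_one.1 h)).symm
      refine imp_merge (hf.2 _).1 (hf.2 _).2 hv L L' hL hL' p2 ?_ (by group)
      convert q2 using 1
      funext g
      simp only [col, smul_smul]
      congr 2
      group
    · intro L _
      exact measurable_const_smul _ (hSm L)
  refine le_trans ?_ h1
  have h2 : ∑ L ∈ LL R, μ (S L) = ∫⁻ x, ∑ L ∈ LL R, (S L).indicator 1 x ∂μ := by
    rw [lintegral_finsetSum]
    · refine Finset.sum_congr rfl fun L _ => ?_
      rw [lintegral_indicator_one (hSm L)]
    · intro L _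
      exact measurable_one.indicator (hSm L)
  rw [h2, ← lintegral_indicator_const hTm]
  apply lintegral_mono
  intro x
  simp only
  by_cases hx : x ∈ T
  · rw [Set.indicator_of_mem hx]
    have h3 : ∑ L ∈ LL R, (S L).indicator (1 : X → ENNReal) x = (((LL R).filter (Sl (col f x))).card : ENNReal) := by
      rw [Finset.card_filter]
      push_cast
      refine Finset.sum_congr rfl fun L _ => ?_
      by_cases hL : Sl (col f x) L
      · rw [Set.indicator_of_mem (show x ∈ S L from ⟨hx, hL⟩), if_pos hL]; rfl
      · rw [Set.indicator_of_notMem (show x ∉ S L from fun h => hL h.2), if_neg hL]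
    rw [h3]
    norm_cast
    have hx1 : f x = 4 := hx.1
    exact card_total (hf.2 x).1 (hf.2 x).2 h4 (fun h => hx.2 (hAI x h)) (by simpa [col] using hx1)
  · rw [Set.indicator_of_notMem hx]; exact zero_le

noncomputable def patch (W : Finset Gam) (g c : Gam → Fin 5) : Gam → Fin 5 := by
  classical exact fun h => if h ∈ W then g h else c h

def nbh (W : Finset Gam) : Finset Gam := W ∪ (Finset.univ : Finset Let).biUnion fun t => W.image fun g => gl t * g

lemma improve {Q : Finset (Fin 5)} {f : X → Fin 5} (hf : Good Q f) (W : Finset Gam) (g0 g : Gam → Fin 5)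
    (hg : ∀ h ∈ W, g h = 4 ∨ g h ∈ Q) (k : ℕ) (hk : (W.filter (fun h => g h ≠ g0 h)).card ≤ k)
    (htok : (W.filter (fun h => g h = 4)).card < (W.filter (fun h => g0 h = 4)).card)
    {B : Set X} (hB : MeasurableSet B) (hsep : ∀ x ∈ B, ∀ h ∈ nbh W, ∀ h' ∈ W, h ≠ h' → (h'⁻¹ * h) • x ∉ B)
    (hB0 : ∀ x ∈ B, ∀ h ∈ W, f (h • x) = g0 h) (hB1 : ∀ x ∈ B, Pr (patch W g (col f x))) :
    ∃ f' : X → Fin 5, Good Q f' ∧ μ.real {x | f' x = 4} + μ.real B ≤ μ.real {x | f x = 4} ∧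
      μ.real {x | f' x ≠ f x} ≤ k * μ.real B := by
  classical
  have hWn : ∀ h ∈ W, h ∈ nbh W := fun h hh => Finset.mem_union_left _ hh
  have htn : ∀ t, ∀ h ∈ W, gl t * h ∈ nbh W := fun t h hh => by
    apply Finset.mem_union_right
    rw [Finset.mem_biUnion]
    exact ⟨t, Finset.mem_univ _, Finset.mem_image.2 ⟨h, hh, rfl⟩⟩
  have huniq : ∀ z h h', h ∈ nbh W → h' ∈ W → h⁻¹ • z ∈ B → h'⁻¹ • z ∈ B → h = h' := by
    intro z h h' hh hh' hz hz'
    by_contra hne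
    apply hsep _ hz h hh h' hh' hne
    rw [smul_smul]
    simpa using hz'
  let C : Gam → Set X := fun h => (fun z => h⁻¹ • z) ⁻¹' B
  have hCm : ∀ h, MeasurableSet (C h) := fun h => measurable_const_smul _ hB
  have hCμ : ∀ h, μ.real (C h) = μ.real B := fun h => by
    simp only [Measure.real, C]; rw [measure_preimage_smul]
  have hCd : ∀ V : Finset Gam, V ⊆ W → (V : Set Gam).PairwiseDisjoint C := by
    intro V hV h hh h' hh' hne
    rw [Function.onFun, Set.disjoint_left]
    intro z hz hz'
    exact hne (huniq z h h' (hWn h (hV hh)) (hV hh') hz hz')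
  let f' : X → Fin 5 := fun z => if hz : ∃ h ∈ W, z ∈ C h then g hz.choose else f z
  have hf'1 : ∀ z h, h ∈ W → z ∈ C h → f' z = g h := by
    intro z h hh hz
    have hex : ∃ h ∈ W, z ∈ C h := ⟨h, hh, hz⟩
    simp only [f', dif_pos hex]
    congr 1
    exact huniq z _ _ (hWn _ hex.choose_spec.1) hh hex.choose_spec.2 hz
  have hf'2 : ∀ z, (¬ ∃ h ∈ W, z ∈ C h) → f' z = f z := by
    intro z hz
    simp only [f', dif_neg hz]
  have hpat : ∀ z h, h ∈ nbh W → z ∈ C h → f' z = patch W g (col f (h⁻¹ • z)) h := by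
    intro z h hh hz
    by_cases hW : h ∈ W
    · rw [hf'1 z h hW hz]; simp [patch, hW]
    · rw [hf'2 z]
      · simp [patch, hW, col]
      · rintro ⟨h', hh', hz'⟩
        exact hW ((huniq z h h' hh hh' hz hz') ▸ hh')
  have hset : ∀ j, {z | f' z = j} = (⋃ h ∈ W.filter (fun h => g h = j), C h) ∪
      ({z | f z = j} \ ⋃ h ∈ W, C h) := by
    intro j
    ext z
    by_cases hz : ∃ h ∈ W, z ∈ C h
    · obtain ⟨h, hh, hz⟩ := hz
      simp only [Set.mem_ofPred_eq, Set.mem_union, Set.mem_iUnion, Finset.mem_filter, Set.mem_sdiff]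
      rw [hf'1 z h hh hz]
      constructor
      · intro hj; exact Or.inl ⟨h, ⟨hh, hj⟩, hz⟩
      · rintro (⟨h', ⟨h1, h2⟩, h3⟩ | ⟨_, h1⟩)
        · rw [huniq z h h' (hWn h hh) h1 hz h3]; exact h2
        · exact absurd (⟨h, hh, hz⟩ : ∃ i, ∃ (_ : i ∈ W), z ∈ C i) h1
    · simp only [Set.mem_ofPred_eq, Set.mem_union, Set.mem_iUnion, Finset.mem_filter, Set.mem_sdiff]
      rw [hf'2 z hz]
      constructor
      · intro hj; exact Or.inr ⟨hj, by simpa using hz⟩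
      · rintro (⟨h', ⟨h1, h2⟩, h3⟩ | ⟨h1, _⟩)
        · exact absurd ⟨h', h1, h3⟩ hz
        · exact h1
  refine ⟨f', ⟨?_, ?_⟩, ?_, ?_⟩
  · apply measurable_to_countable'
    intro j
    change MeasurableSet {z | f' z = j}
    rw [hset]
    refine (Finset.measurableSet_biUnion _ fun h _ => hCm h).union
      ((measurableSet_eq_fun hf.1 measurable_const).diff (Finset.measurableSet_biUnion _ fun h _ => hCm h))
  · have hpr : ∀ z t, f' (gl t • z) = f' z → f' z = 4 := by
      intro z t e
      have key : ∀ h, h ∈ nbh W → gl t * h ∈ nbh W → z ∈ C h → f' z = 4 := by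
        intro h h1 h2 hz
        have hz' : gl t • z ∈ C (gl t * h) := by
          change (gl t * h)⁻¹ • gl t • z ∈ B
          rw [smul_smul]
          have hz : h⁻¹ • z ∈ B := hz
          simpa using hz
        have e1 := hpat z h h1 hz
        have e2 := hpat _ _ h2 hz'
        have e3 : (gl t * h)⁻¹ • gl t • z = h⁻¹ • z := by rw [smul_smul]; simp
        rw [e3] at e2
        rw [e1]
        apply hB1 _ hz t
        rw [← e1, ← e2, e]
      by_cases c1 : ∃ h ∈ W, z ∈ C h
      · obtain ⟨h, hh, hz⟩ := c1
        exact key h (hWn h hh) (htn t h hh) hz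
      · by_cases c2 : ∃ h ∈ W, gl t • z ∈ C h
        · obtain ⟨h, hh, hz⟩ := c2
          refine key (gl (li t) * h) (htn _ _ hh) ?_ ?_
          · rw [gl_li]; simpa using hWn h hh
          · change (gl (li t) * h)⁻¹ • z ∈ B
            have hz : h⁻¹ • gl t • z ∈ B := hz
            rw [gl_li]
            rw [smul_smul] at hz
            simpa using hz
        · rw [hf'2 z c1, hf'2 _ c2] at e
          rw [hf'2 z c1]
          have := (hf.2 z).1 t 1
          simp only [col, mul_one, one_smul] at this
          exact this e
    intro x
    refine ⟨fun t h e => ?_, fun h => ?_⟩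
    · apply hpr _ t
      rw [smul_smul]; exact e
    · change f' (h • x) = 4 ∨ f' (h • x) ∈ Q
      by_cases c1 : ∃ h' ∈ W, h • x ∈ C h'
      · obtain ⟨h', hh, hz⟩ := c1
        rw [hf'1 _ _ hh hz]; exact hg _ hh
      · rw [hf'2 _ c1]; exact (hf.2 x).2 h
  · rw [hset]
    have s1 : μ.real (⋃ h ∈ W.filter (fun h => g h = 4), C h) = (W.filter (fun h => g h = 4)).card * μ.real B := by
      rw [measureReal_biUnion_finset (hCd _ (Finset.filter_subset _ _)) (fun h _ => hCm h)]
      simp [hCμ]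
    have s2 : μ.real (⋃ h ∈ W.filter (fun h => g0 h = 4), C h) = (W.filter (fun h => g0 h = 4)).card * μ.real B := by
      rw [measureReal_biUnion_finset (hCd _ (Finset.filter_subset _ _)) (fun h _ => hCm h)]
      simp [hCμ]
    have s3 : μ.real ({z | f z = 4} \ ⋃ h ∈ W, C h) ≤ μ.real {z | f z = 4} - (W.filter (fun h => g0 h = 4)).card * μ.real B := by
      rw [← s2, ← measureReal_sdiff]
      · refine measureReal_mono ?_ (measure_ne_top _ _)
        intro z hz
        refine ⟨hz.1, fun h => hz.2 ?_⟩
        simp only [Set.mem_iUnion, Finset.mem_filter] at h ⊢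
        obtain ⟨a, b, c⟩ := h
        exact ⟨a, b.1, c⟩
      · intro z hz
        simp only [Set.mem_iUnion, Finset.mem_filter] at hz
        obtain ⟨a, b, c⟩ := hz
        have := hB0 _ c a b.1
        rw [smul_smul] at this
        simp only [mul_inv_cancel, one_smul] at this
        exact this.trans b.2
      · exact Finset.measurableSet_biUnion _ fun h _ => hCm h
    have s4 := measureReal_union_le (μ := μ) (⋃ h ∈ W.filter (fun h => g h = 4), C h)
      ({z | f z = 4} \ ⋃ h ∈ W, C h)
    rw [s1] at s4
    have s5 : ((W.filter (fun h => g h = 4)).card : ℝ) + 1 ≤ (W.filter (fun h => g0 h = 4)).card := by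
      exact_mod_cast htok
    have s6 := mul_le_mul_of_nonneg_right s5 (measureReal_nonneg (μ := μ) (s := B))
    linarith
  · have s1 : μ.real (⋃ h ∈ W.filter (fun h => g h ≠ g0 h), C h) = (W.filter (fun h => g h ≠ g0 h)).card * μ.real B := by
      rw [measureReal_biUnion_finset (hCd _ (Finset.filter_subset _ _)) (fun h _ => hCm h)]
      simp [hCμ]
    refine le_trans (measureReal_mono (?_ : _ ⊆ ⋃ h ∈ W.filter (fun h => g h ≠ g0 h), C h) (measure_ne_top _ _)) ?_
    · intro z hz
      simp only [Set.mem_iUnion, Finset.mem_filter]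
      by_contra hcon
      apply hz
      by_cases c1 : ∃ h ∈ W, z ∈ C h
      · obtain ⟨h, hh, hz'⟩ := c1
        rw [hf'1 z h hh hz']
        have := hB0 _ hz' h hh
        rw [smul_smul] at this
        simp only [mul_inv_cancel, one_smul] at this
        rw [this]
        by_contra hne
        exact hcon ⟨h, ⟨hh, hne⟩, hz'⟩
      · exact hf'2 z c1
    · rw [s1]
      gcongr

end dyn
end FC

namespace FC
open FreeGroup

section dyn2

lemma imp_patch {Q : Finset (Fin 5)} {n k : ℕ} {c : Gam → Fin 5} (h : Imp Q n k c) (W : Finset Gam)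
    (hW : ∀ g : Gam, g.norm ≤ n → g ∈ W) : ∃ c', Pr (patch W c' c) ∧ (∀ h ∈ W, c' h = 4 ∨ c' h ∈ Q) ∧
      (W.filter (fun h => c' h ≠ c h)).card ≤ k ∧
      (W.filter (fun h => c' h = 4)).card < (W.filter (fun h => c h = 4)).card := by
  classical
  obtain ⟨c', p1, p2, D, d1, d2, d3, d4⟩ := h
  have hDW : D ⊆ W := fun g hg => hW g (d2 g hg)
  have e : patch W c' c = c' := by
    funext g
    by_cases hg : g ∈ W
    · simp [patch, hg]
    · simp only [patch, hg, if_false]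
      exact (d3 g fun h => hg (hDW h)).symm
  refine ⟨c', by rw [e]; exact p1, fun h _ => p2 h, ?_, ?_⟩
  · refine le_trans (Finset.card_le_card ?_) d1
    intro g hg
    rw [Finset.mem_filter] at hg
    by_contra h
    exact hg.2 (d3 g h)
  · rw [Finset.card_filter, Finset.card_filter] at *
    rw [← Finset.sum_sdiff hDW, ← Finset.sum_sdiff hDW]
    have : ∑ x ∈ W \ D, (if c' x = 4 then 1 else 0) = ∑ x ∈ W \ D, (if c x = 4 then 1 else 0) := by
      refine Finset.sum_congr rfl fun x hx => ?_
      rw [d3 x (Finset.mem_sdiff.1 hx).2]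
    rw [this]
    omega

noncomputable def WW (n : ℕ) : Finset Gam := by
  classical exact (LL n).image (fun L => (mk L : Gam))

lemma mem_WW {n : ℕ} {g : Gam} (h : g.norm ≤ n) : g ∈ WW n := by
  classical
  rw [WW, Finset.mem_image]
  exact ⟨g.toWord, mem_LL.2 h, mk_toWord⟩

variable {X : Type*} [MeasurableSpace X] [MulAction Gam X]

def Sep (μ : Measure X) : Prop := ∀ (F : Finset Gam) (a : ℝ), 0 < a → ∃ c : ℝ, 0 < c ∧
  ∀ A : Set X, MeasurableSet A → a ≤ μ.real A → ∃ B ⊆ A, MeasurableSet B ∧ c ≤ μ.real B ∧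
    ∀ x ∈ B, ∀ γ ∈ F, γ ≠ 1 → γ • x ∉ B

variable [MeasurableConstSMul Gam X] (μ : Measure X) [IsProbabilityMeasure μ] [SMulInvariantMeasure Gam X μ]

lemma gain (hS : Sep μ) {Q : Finset (Fin 5)} (h4 : 4 ∉ Q) (R : ℕ) {a : ℝ} (ha : 0 < a) :
    ∃ c : ℝ, 0 < c ∧ ∀ f : X → Fin 5, Good Q f →
      1 / ((∑ n ∈ Finset.range (R + 1), (2 * Q.card - 5) ^ n : ℕ) : ℝ) + a ≤ μ.real {x | f x = 4} →
      ∃ f' : X → Fin 5, Good Q f' ∧ μ.real {x | f' x = 4} + c ≤ μ.real {x | f x = 4} ∧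
        μ.real {x | f' x ≠ f x} ≤ (2 * R + 2 : ℕ) * (μ.real {x | f x = 4} - μ.real {x | f' x = 4}) := by
  classical
  set N := ∑ n ∈ Finset.range (R + 1), (2 * Q.card - 5) ^ n with hN
  have hNpos : 0 < N := by
    rw [hN, Finset.sum_range_succ']
    simp
  set W := WW (3 * R)
  let E : (W → Fin 5) → Gam → Fin 5 := fun g h => if hh : h ∈ W then g ⟨h, hh⟩ else 0
  have hE : ∀ (c : Gam → Fin 5) h, h ∈ W → E (fun w => c w) h = c h := by
    intro c h hh; simp [E, hh]
  let P := (W → Fin 5) × (W → Fin 5)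
  let V : P → Prop := fun p => (∀ h ∈ W, E p.2 h = 4 ∨ E p.2 h ∈ Q) ∧
    (W.filter (fun h => E p.2 h ≠ E p.1 h)).card ≤ 2 * R + 2 ∧
      (W.filter (fun h => E p.2 h = 4)).card < (W.filter (fun h => E p.1 h = 4)).card
  set M : ℝ := (Fintype.card P : ℝ) with hM
  have hMpos : 0 < M := by
    rw [hM]; exact_mod_cast Fintype.card_pos
  obtain ⟨c, hc, hcB⟩ := hS (((nbh W) ×ˢ W).image fun q => q.2⁻¹ * q.1) (a / M) (div_pos ha hMpos)
  refine ⟨c, hc, ?_⟩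
  intro f hf hbig
  let Ap : P → Set X := fun p => {x | V p ∧ (∀ h : W, f ((h : Gam) • x) = E p.1 h) ∧
    Pr (patch W (E p.2) (col f x))}
  have hApm : ∀ p, MeasurableSet (Ap p) := by
    intro p
    apply measurableSet_setOfPred.2
    refine measurable_const.and (Measurable.and ?_ ?_)
    · exact Measurable.forall fun h => mp_eq (meas_col hf.1 h) measurable_const
    · apply measurableSet_setOfPred.1
      apply meas_Pr
      intro g
      by_cases hg : g ∈ W
      · simp only [patch, hg, if_true]; exact measurable_const
      · simp only [patch, hg, if_false]; exact meas_col hf.1 g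
  set A := ⋃ p, Ap p with hA
  have hAm : MeasurableSet A := MeasurableSet.iUnion hApm
  have hAI : ∀ x, Imp Q (3 * R) (2 * R + 2) (col f x) → x ∈ A := by
    intro x hx
    obtain ⟨c', q1, q2, q3, q4⟩ := imp_patch hx W (fun g hg => mem_WW hg)
    rw [hA, Set.mem_iUnion]
    refine ⟨⟨fun w => col f x w, fun w => c' w⟩, ⟨?_, ?_, ?_⟩, ?_, ?_⟩
    · intro h hh
      simp only
      rw [hE _ _ hh]; exact q2 h hh
    · refine le_trans (le_of_eq ?_) q3
      congr 1
      refine Finset.filter_congr fun h hh => ?_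
      simp only
      rw [hE c' _ hh, hE (col f x) _ hh]
    · convert q4 using 1
      · congr 1
        refine Finset.filter_congr fun h hh => ?_
        simp only
        rw [hE _ _ hh]
      · congr 1
        refine Finset.filter_congr fun h hh => ?_
        simp only
        rw [hE _ _ hh]
    · intro h
      simp only
      rw [hE _ _ h.2]; rfl
    · convert q1 using 1
      funext h
      by_cases hh : h ∈ W
      · simp only [patch, hh, if_true]; rw [hE _ _ hh]
      · simp only [patch, hh, if_false]
  have htr := transport μ h4 hf R hAm hAI
  rw [← hN] at htr
  have htr' : (N : ℝ) * μ.real ({x | f x = 4} \ A) ≤ 1 := by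
    have := ENNReal.toReal_mono (by simp) htr
    simpa [Measure.real] using this
  have hT1 : μ.real ({x | f x = 4} \ A) ≤ 1 / N := by
    rw [le_div_iff₀ (by exact_mod_cast hNpos)]; linarith
  have hT2 : μ.real {x | f x = 4} ≤ μ.real ({x | f x = 4} \ A) + μ.real A := by
    refine le_trans (measureReal_mono ?_ (measure_ne_top _ _)) (measureReal_union_le _ _)
    intro x hx
    by_cases h : x ∈ A
    · exact Or.inr h
    · exact Or.inl ⟨hx, h⟩
  have hAa : a ≤ μ.real A := by linarith
  have hp : ∃ p, a / M ≤ μ.real (Ap p) := by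
    by_contra hcon
    push Not at hcon
    have h1 : μ.real A ≤ ∑ p, μ.real (Ap p) := measureReal_iUnion_fintype_le _
    have h2 : ∑ p, μ.real (Ap p) < ∑ _p : P, a / M :=
      Finset.sum_lt_sum_of_nonempty Finset.univ_nonempty fun p _ => hcon p
    rw [Finset.sum_const, nsmul_eq_mul, Finset.card_univ, ← hM, mul_div_cancel₀ _ hMpos.ne'] at h2
    linarith
  obtain ⟨p, hp⟩ := hp
  obtain ⟨B, hBA, hBm, hBc, hBs⟩ := hcB _ (hApm p) hp
  have hBne : ∃ x, x ∈ B := by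
    by_contra hcon
    push Not at hcon
    rw [Set.eq_empty_iff_forall_notMem.2 hcon] at hBc
    simp at hBc
    linarith
  obtain ⟨x0, hx0⟩ := hBne
  have hV : V p := (hBA hx0).1
  obtain ⟨f', g1, g2, g3⟩ := improve μ hf W (E p.1) (E p.2) hV.1 (2 * R + 2) hV.2.1 hV.2.2 hBm (by
      intro x hx h hh h' hh' hne
      apply hBs x hx
      · rw [Finset.mem_image]
        exact ⟨(h, h'), Finset.mem_product.2 ⟨hh, hh'⟩, rfl⟩
      · intro e
        exact hne (inv_mul_eq_one.1 e).symm)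
    (fun x hx h hh => (hBA hx).2.1 ⟨h, hh⟩) (fun x hx => (hBA hx).2.2)
  refine ⟨f', g1, by linarith, g3.trans ?_⟩
  gcongr
  linarith

lemma reduce_tokens (hS : Sep μ) {Q : Finset (Fin 5)} (h4 : 4 ∉ Q) (R : ℕ) {b : ℝ}
    (hb : 1 / ((∑ n ∈ Finset.range (R + 1), (2 * Q.card - 5) ^ n : ℕ) : ℝ) < b)
    (f : X → Fin 5) (hf : Good Q f) :
    ∃ f' : X → Fin 5, Good Q f' ∧ μ.real {x | f' x = 4} < b ∧
      μ.real {x | f' x ≠ f x} ≤ (2 * R + 2 : ℕ) * (μ.real {x | f x = 4} - μ.real {x | f' x = 4}) := by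
  obtain ⟨c, hc, hg⟩ := gain μ hS h4 R (a := b - 1 / ((∑ n ∈ Finset.range (R + 1), (2 * Q.card - 5) ^ n : ℕ) : ℝ))
    (by linarith)
  have hb0 : 0 < b := lt_of_le_of_lt (by positivity) hb
  have key : ∀ (n : ℕ) (f : X → Fin 5), Good Q f → μ.real {x | f x = 4} ≤ n * c →
      ∃ f' : X → Fin 5, Good Q f' ∧ μ.real {x | f' x = 4} < b ∧
      μ.real {x | f' x ≠ f x} ≤ (2 * R + 2 : ℕ) * (μ.real {x | f x = 4} - μ.real {x | f' x = 4}) := by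
    intro n
    induction n with
    | zero =>
      intro f hf hn
      refine ⟨f, hf, ?_, by simp⟩
      simp only [Nat.cast_zero, zero_mul] at hn
      linarith
    | succ n ih =>
      intro f hf hn
      by_cases hlt : μ.real {x | f x = 4} < b
      · exact ⟨f, hf, hlt, by simp⟩
      · obtain ⟨f1, p1, p2, p3⟩ := hg f hf (by linarith)
        obtain ⟨f2, q1, q2, q3⟩ := ih f1 p1 (by push_cast at hn; linarith)
        refine ⟨f2, q1, q2, ?_⟩
        have : μ.real {x | f2 x ≠ f x} ≤ μ.real {x | f2 x ≠ f1 x} + μ.real {x | f1 x ≠ f x} := by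
          refine le_trans (measureReal_mono ?_ (measure_ne_top _ _)) (measureReal_union_le _ _)
          intro x hx
          by_cases h : f2 x = f1 x
          · right
            intro h'
            exact hx (h.trans h')
          · exact Or.inl h
        linarith
  obtain ⟨n, hn⟩ := exists_nat_ge (μ.real {x | f x = 4} / c)
  exact key n f hf (by rwa [div_le_iff₀ hc] at hn)

end dyn2
end FC

namespace FC
open FreeGroup

section fin
variable {X : Type*} [MeasurableSpace X] [MulAction Gam X]
variable [MeasurableConstSMul Gam X] (μ : Measure X) [IsProbabilityMeasure μ] [SMulInvariantMeasure Gam X μ]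

lemma phase1 (hS : Sep μ) {h : ℝ} (hh : 0 < h) :
    ∃ f : X → Fin 5, Good {0, 1, 2} f ∧ μ.real {x | f x = 4} < h := by
  obtain ⟨R, hR⟩ := exists_nat_one_div_lt hh
  have hg : Good {0, 1, 2} (fun _ : X => (4 : Fin 5)) :=
    ⟨measurable_const, fun x => ⟨fun _ _ _ => rfl, fun _ => Or.inl rfl⟩⟩
  obtain ⟨f', h1, h2, _⟩ := reduce_tokens μ hS (Q := {0, 1, 2}) (by decide) R (b := h) (by
    have : ({0, 1, 2} : Finset (Fin 5)).card = 3 := by decide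
    rw [this]
    simpa using hR) _ hg
  exact ⟨f', h1, h2⟩

lemma phase2 (hS : Sep μ) (R : ℕ) (f : X → Fin 5) (hf : Good {0, 1, 2, 3} f) :
    ∃ f' : X → Fin 5, Good {0, 1, 2, 3} f' ∧ μ.real {x | f' x = 4} < 2 * (1 / 3 : ℝ) ^ R ∧
      μ.real {x | f' x ≠ f x} ≤ (2 * R + 2) * μ.real {x | f x = 4} := by
  obtain ⟨f', h1, h2, h3⟩ := reduce_tokens μ hS (Q := {0, 1, 2, 3}) (by decide) R (b := 2 * (1 / 3 : ℝ) ^ R) (by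
    have : ({0, 1, 2, 3} : Finset (Fin 5)).card = 4 := by decide
    rw [this]
    have h3 : 3 ^ R ≤ ∑ n ∈ Finset.range (R + 1), (2 * 4 - 5) ^ n := by
      rw [Finset.sum_range_succ]
      exact Nat.le_add_left _ _
    have h4 : (3 : ℝ) ^ R ≤ ((∑ n ∈ Finset.range (R + 1), (2 * 4 - 5) ^ n : ℕ) : ℝ) := by exact_mod_cast h3
    have h5 : (0 : ℝ) < 3 ^ R := by positivity
    have h6 := one_div_le_one_div_of_le h5 h4
    have h7 : (1 / 3 : ℝ) ^ R = 1 / 3 ^ R := by rw [div_pow, one_pow]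
    rw [h7]
    have : 0 < 1 / (3 : ℝ) ^ R := by positivity
    linarith) _ hf
  refine ⟨f', h1, h2, h3.trans ?_⟩
  push_cast
  gcongr
  have := measureReal_nonneg (μ := μ) (s := {x | f' x = 4})
  linarith

noncomputable def ww (k : ℕ) : ℝ := (4 * k + 8) * (1 / 3 : ℝ) ^ k

lemma ww_summable : Summable ww := by
  have h1 : Summable fun k : ℕ => (k : ℝ) ^ 1 * (1 / 3 : ℝ) ^ k :=
    summable_pow_mul_geometric_of_norm_lt_one 1 (by norm_num)
  have h2 : Summable fun k : ℕ => (1 / 3 : ℝ) ^ k := summable_geometric_of_lt_one (by norm_num) (by norm_num)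
  have := (h1.mul_left 4).add (h2.mul_left 8)
  refine this.congr fun k => ?_
  simp only [ww]; ring

lemma ww_nonneg (k : ℕ) : 0 ≤ ww k := by unfold ww; positivity

lemma seqF (hS : Sep μ) (R0 : ℕ) : ∃ F : ℕ → X → Fin 5, (∀ n, Good {0, 1, 2, 3} (F n)) ∧
    (∀ x, F 0 x ≠ 3) ∧ (∀ n, μ.real {x | F n x = 4} ≤ ww (n + R0)) ∧
    (∀ n, μ.real {x | F (n + 1) x ≠ F n x} ≤ ww (n + R0)) := by
  obtain ⟨f1, p1, p2⟩ := phase1 μ hS (h := 2 * (1 / 3 : ℝ) ^ R0) (by positivity)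
  have p1' : Good {0, 1, 2, 3} f1 := by
    refine ⟨p1.1, fun x => ⟨(p1.2 x).1, fun g => ?_⟩⟩
    rcases (p1.2 x).2 g with h | h
    · exact Or.inl h
    · right
      revert h
      generalize col f1 x g = j
      revert j; decide
  let P : ℕ → (X → Fin 5) → Prop := fun n f => Good {0, 1, 2, 3} f ∧ μ.real {x | f x = 4} < 2 * (1 / 3 : ℝ) ^ (n + R0)
  have step : ∀ n (f : {f // P n f}), ∃ f' : {f // P (n + 1) f},
      μ.real {x | f'.1 x ≠ f.1 x} ≤ (2 * ((n + 1 + R0 : ℕ) : ℝ) + 2) * μ.real {x | f.1 x = 4} := by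
    rintro n ⟨f, hf⟩
    obtain ⟨f', h1, h2, h3⟩ := phase2 μ hS (n + 1 + R0) f hf.1
    exact ⟨⟨f', h1, h2⟩, h3⟩
  choose nx hnx using step
  let G : ∀ n, {f // P n f} := fun n => Nat.rec ⟨f1, p1', by simpa using p2⟩ (fun n f => nx n f) n
  have hww : ∀ n, 2 * (1 / 3 : ℝ) ^ (n + R0) ≤ ww (n + R0) := by
    intro n
    unfold ww
    gcongr
    have : (0 : ℝ) ≤ ((n + R0 : ℕ) : ℝ) := by positivity
    linarith
  refine ⟨fun n => (G n).1, fun n => (G n).2.1, ?_, ?_, ?_⟩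
  · intro x
    change f1 x ≠ 3
    have := (p1.2 x).2 1
    simp only [col, one_smul] at this
    revert this
    generalize f1 x = j
    revert j; decide
  · intro n
    exact (G n).2.2.le.trans (hww n)
  · intro n
    refine (hnx n (G n)).trans ?_
    refine (mul_le_mul_of_nonneg_left (G n).2.2.le (by positivity)).trans (le_of_eq ?_)
    unfold ww
    push_cast
    ring

lemma final (hS : Sep μ) {ε : ℝ} (hε : 0 < ε) : ∃ f : X → Fin 4, Measurable f ∧
    (∀ᵐ x ∂μ, ∀ t : Let, f (gl t • x) ≠ f x) ∧ μ {x | f x = 3} < ENNReal.ofReal ε := by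
  classical
  obtain ⟨R0, hR0⟩ : ∃ R0, ∑' n, ww (n + R0) < ε :=
    ((tendsto_sum_nat_add ww).eventually (gt_mem_nhds hε)).exists
  have hsum : Summable fun n => ww (n + R0) := (summable_nat_add_iff R0).2 ww_summable
  obtain ⟨F, F1, F2, F3, F4⟩ := seqF μ hS R0
  have conv : ∀ S : ℕ → Set X, (∀ n, μ.real (S n) ≤ ww (n + R0)) → ∑' n, μ (S n) < ENNReal.ofReal ε := by
    intro S h
    refine lt_of_le_of_lt (b := ∑' n, ENNReal.ofReal (ww (n + R0))) (ENNReal.tsum_le_tsum fun n => ?_) ?_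
    · rw [← ofReal_measureReal (measure_ne_top _ _)]
      exact ENNReal.ofReal_le_ofReal (h n)
    · rw [← ENNReal.ofReal_tsum_of_nonneg (fun n => ww_nonneg _) hsum]
      exact (ENNReal.ofReal_lt_ofReal_iff hε).2 hR0
  have a1 := ae_eventually_notMem (μ := μ) (conv _ F3).ne_top
  have a2 := ae_eventually_notMem (μ := μ) (conv _ F4).ne_top
  let Ev : Fin 4 → X → Prop := fun j x => ∀ᶠ n in Filter.atTop, F n x = j.castSucc
  have hEvm : ∀ j, MeasurableSet {x | Ev j x} := by
    intro j
    apply measurableSet_setOfPred.2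
    simp only [Ev, Filter.eventually_atTop]
    exact Measurable.exists fun a => Measurable.forall fun b => measurable_const.imp
      (mp_eq (F1 b).1 measurable_const)
  have hY : ∀ᵐ x ∂μ, ∃ j, Ev j x := by
    filter_upwards [a1, a2] with x h1 h2
    obtain ⟨n, hn⟩ := Filter.eventually_atTop.1 (h1.and h2)
    have hc : ∀ m, F (n + m) x = F n x := by
      intro m
      induction m with
      | zero => rfl
      | succ m ih =>
        rw [← ih]
        have := (hn (n + m) (by omega)).2
        by_contra hne
        exact this hne
    have h4 : F n x ≠ 4 := (hn n le_rfl).1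
    have : ∃ j : Fin 4, F n x = j.castSucc := by
      revert h4
      generalize F n x = i
      revert i; decide
    obtain ⟨j, hj⟩ := this
    refine ⟨j, Filter.eventually_atTop.2 ⟨n, fun b hb => ?_⟩⟩
    obtain ⟨m, rfl⟩ := Nat.exists_eq_add_of_le hb
    rw [hc, hj]
  have hun : ∀ x j j', Ev j x → Ev j' x → j = j' := by
    intro x j j' h h'
    obtain ⟨n, hn⟩ := (h.and h').exists
    exact Fin.castSucc_injective _ (hn.1.symm.trans hn.2)
  let f : X → Fin 4 := fun x => if Ev 0 x then 0 else if Ev 1 x then 1 else if Ev 2 x then 2 else 3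
  have hfE : ∀ x j, Ev j x → f x = j := by
    intro x j hj
    have e : ∀ i, Ev i x ↔ i = j := fun i => ⟨fun h => hun x i j h hj, fun h => h ▸ hj⟩
    simp only [f, e]
    clear e hj
    fin_cases j <;> simp
  refine ⟨f, ?_, ?_, ?_⟩
  · exact Measurable.ite (hEvm 0) measurable_const (Measurable.ite (hEvm 1) measurable_const
      (Measurable.ite (hEvm 2) measurable_const measurable_const))
  · have hYt : ∀ᵐ x ∂μ, ∀ t : Let, ∃ j, Ev j (gl t • x) := by
      rw [ae_all_iff]
      intro t
      exact (measurePreserving_smul (gl t) μ).quasiMeasurePreserving.ae hY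
    filter_upwards [hY, hYt, a1] with x h1 h2 h3 t e
    obtain ⟨j, hj⟩ := h1
    obtain ⟨i, hi⟩ := h2 t
    rw [hfE _ _ hj, hfE _ _ hi] at e
    subst e
    obtain ⟨n, hn⟩ := ((hi.and hj).and h3).exists
    apply hn.2
    have := ((F1 n).2 x).1 t 1
    simp only [col, mul_one, one_smul] at this
    exact this (hn.1.1.trans hn.1.2.symm)
  · refine lt_of_le_of_lt ?_ (conv _ F4)
    refine le_trans ?_ (measure_iUnion_le _)
    apply measure_mono_ae
    filter_upwards [hY] with x h1 hx
    obtain ⟨j, hj⟩ := h1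
    have hx : f x = 3 := hx
    rw [hfE _ _ hj] at hx
    subst hx
    obtain ⟨n, hn⟩ := hj.exists
    by_contra hcon
    have hcon : ∀ n, F (n + 1) x = F n x := by
      intro n
      by_contra h
      exact hcon (Set.mem_iUnion.2 ⟨n, h⟩)
    have : ∀ n, F n x = F 0 x := by
      intro n
      induction n with
      | zero => rfl
      | succ n ih => rw [hcon, ih]
    exact F2 x ((this n).symm.trans hn)

end fin
end FC

namespace FC
open FreeGroup

noncomputable abbrev nu : Measure ℝ := volume.restrict (Set.Icc (0:ℝ) 1)

lemma nu_prob : IsProbabilityMeasure nu := ⟨by simp [nu]⟩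

@[reducible] def act : MulAction Gam (Gam → ℝ) where
  smul γ x := fun δ => x (γ⁻¹ * δ)
  one_smul x := by
    funext δ
    change x (1⁻¹ * δ) = x δ
    simp
  mul_smul a b x := by
    funext δ
    change x ((a * b)⁻¹ * δ) = x (b⁻¹ * (a⁻¹ * δ))
    simp [mul_assoc]

section
variable (μ : Measure (Gam → ℝ))
    (hμ : ∀ s : Finset Gam,
      Measure.map (fun (x : Gam → ℝ) (v : s) => x v) μ
        = Measure.pi (fun _ : s => volume.restrict (Set.Icc (0:ℝ) 1)))

include hμ in
lemma mu_pi (s : Finset Gam) (t : Gam → Set ℝ) (ht : ∀ i, MeasurableSet (t i)) :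
    μ ((s : Set Gam).pi t) = ∏ i ∈ s, nu (t i) := by
  have h := congrArg (fun m => m (Set.univ.pi fun i : s => t i)) (hμ s)
  have hs : MeasurableSet (Set.univ.pi fun i : s => t i) := MeasurableSet.univ_pi fun i => ht i
  rw [Measure.map_apply (by fun_prop) hs, Measure.pi_pi] at h
  rw [Finset.prod_coe_sort s (fun i => nu (t i))] at h
  rw [← h]
  congr 1
  ext x
  simp [Set.mem_pi]

include hμ in
lemma mu_inf : haveI := nu_prob; μ = Measure.infinitePi (fun _ : Gam => nu) := by
  haveI := nu_prob
  exact Measure.eq_infinitePi _ (mu_pi μ hμ)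

lemma act_meas : letI := act; MeasurableConstSMul Gam (Gam → ℝ) := by
  letI := act
  refine ⟨fun γ => ?_⟩
  change Measurable fun x : Gam → ℝ => fun δ => x (γ⁻¹ * δ)
  fun_prop

include hμ in
lemma act_inv : letI := act; SMulInvariantMeasure Gam (Gam → ℝ) μ := by
  letI := act
  haveI := nu_prob
  refine ⟨fun γ s hs => ?_⟩
  have h1 := Measure.infinitePi_map_piCongrLeft (fun _ : Gam => nu) (Equiv.mulLeft γ)
  rw [← mu_inf μ hμ] at h1
  have h2 : (⇑(MeasurableEquiv.piCongrLeft (fun _ : Gam => ℝ) (Equiv.mulLeft γ)) : (Gam → ℝ) → Gam → ℝ) =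
      fun x => γ • x := by
    funext x δ
    change _ = x (γ⁻¹ * δ)
    have := Equiv.piCongrLeft_apply_apply (fun _ : Gam => ℝ) (Equiv.mulLeft γ) x (γ⁻¹ * δ)
    rw [MeasurableEquiv.coe_piCongrLeft]
    simpa using this
  rw [h2] at h1
  conv_rhs => rw [← h1]
  rw [Measure.map_apply (act_meas.measurable_const_smul γ) hs]

variable [IsProbabilityMeasure μ]

include hμ in
lemma act_sep : letI := act; Sep μ := by
  classical
  letI := act
  intro F a ha
  obtain ⟨M, hM⟩ := exists_nat_gt (2 * F.card / a)
  have hM0 : (0 : ℝ) < M := lt_of_le_of_lt (by positivity) hM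
  have hFM : (F.card : ℝ) / M ≤ a / 2 := by
    rw [div_lt_iff₀ ha] at hM
    rw [div_le_iff₀ hM0]
    linarith
  refine ⟨a / (2 * M), by positivity, ?_⟩
  intro A hA haA
  let I : ℕ → Set ℝ := fun j => Set.Ico (j / M : ℝ) ((j + 1) / M)
  have hIm : ∀ j, MeasurableSet (I j) := fun j => measurableSet_Ico
  have hIν : ∀ j, nu (I j) ≤ ENNReal.ofReal (1 / M) := by
    intro j
    refine (Measure.restrict_apply_le _ _).trans ?_
    simp only [I, Real.volume_Ico]
    apply ENNReal.ofReal_le_ofReal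
    apply le_of_eq; ring
  let Z : Gam → ℕ → Set (Gam → ℝ) := fun p j => {x | x p ∈ I j}
  have hZm : ∀ p j, MeasurableSet (Z p j) := fun p j => measurable_pi_apply p (hIm j)
  have hcol : ∀ p : Gam, p ≠ 1 → ∀ j, μ.real (Z 1 j ∩ Z p j) ≤ (1 / M) * (1 / M) := by
    intro p hp j
    have e : Z 1 j ∩ Z p j = (({1, p} : Finset Gam) : Set Gam).pi fun _ => I j := by
      ext x
      simp [Z, Set.mem_pi]
    rw [e, Measure.real, mu_pi μ hμ _ _ (fun _ => hIm j), Finset.prod_pair hp.symm]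
    have : nu (I j) * nu (I j) ≤ ENNReal.ofReal ((1 / M) * (1 / M)) := by
      rw [ENNReal.ofReal_mul (by positivity)]
      exact mul_le_mul' (hIν j) (hIν j)
    exact ENNReal.toReal_le_of_le_ofReal (by positivity) this
  have hnull : μ.real {x : Gam → ℝ | x 1 ∉ Set.Ico (0:ℝ) 1} = 0 := by
    have e : {x : Gam → ℝ | x 1 ∉ Set.Ico (0:ℝ) 1} = (({1} : Finset Gam) : Set Gam).pi fun _ => (Set.Ico (0:ℝ) 1)ᶜ := by
      ext x
      simp [Set.mem_pi]
    rw [e, Measure.real, mu_pi μ hμ _ _ (fun _ => measurableSet_Ico.compl), Finset.prod_singleton]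
    have : nu (Set.Ico (0:ℝ) 1)ᶜ = 0 := by
      rw [Measure.restrict_apply measurableSet_Ico.compl]
      refine measure_mono_null (t := {1}) ?_ (by simp)
      intro y hy
      have h1 := hy.1
      have h2 := hy.2
      simp only [Set.mem_compl_iff, Set.mem_Ico, not_and, not_lt] at h1
      exact le_antisymm h2.2 (h1 h2.1)
    rw [this]; simp
  let F' := F.filter (fun γ => γ ≠ 1)
  let B : ℕ → Set (Gam → ℝ) := fun j => (A ∩ Z 1 j) \ ⋃ γ ∈ F', Z γ⁻¹ j
  have hBm : ∀ j, MeasurableSet (B j) := fun j =>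
    (hA.inter (hZm 1 j)).diff (Finset.measurableSet_biUnion _ fun γ _ => hZm _ j)
  have hcover : A ⊆ ((⋃ j ∈ Finset.range M, B j) ∪ {x : Gam → ℝ | x 1 ∉ Set.Ico (0:ℝ) 1}) ∪
      ⋃ γ ∈ F', ⋃ j ∈ Finset.range M, (Z 1 j ∩ Z γ⁻¹ j) := by
    intro x hx
    by_cases h0 : x 1 ∈ Set.Ico (0:ℝ) 1
    · have hj1 : x ∈ Z 1 ⌊M * x 1⌋₊ := by
        change x 1 ∈ Set.Ico _ _
        rw [Set.mem_Ico, div_le_iff₀ hM0, lt_div_iff₀ hM0]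
        have h1 := Nat.floor_le (mul_nonneg hM0.le h0.1)
        have h2 := Nat.lt_floor_add_one (M * x 1)
        constructor <;> linarith
      have hj2 : ⌊M * x 1⌋₊ < M := by
        rw [Nat.floor_lt (mul_nonneg hM0.le h0.1)]
        have := mul_lt_mul_of_pos_left h0.2 hM0
        linarith
      generalize ⌊M * x 1⌋₊ = j at hj1 hj2
      by_cases hc : ∃ γ ∈ F', x ∈ Z γ⁻¹ j
      · right
        obtain ⟨γ, h1, h2⟩ := hc
        simp only [Set.mem_iUnion]
        exact ⟨γ, h1, j, Finset.mem_range.2 hj2, hj1, h2⟩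
      · left; left
        simp only [Set.mem_iUnion]
        refine ⟨j, Finset.mem_range.2 hj2, ⟨hx, hj1⟩, ?_⟩
        simpa using hc
    · exact Or.inl (Or.inr h0)
  have hle : μ.real A ≤ ∑ j ∈ Finset.range M, μ.real (B j) + a / 2 := by
    have h1 := measureReal_mono (μ := μ) hcover (measure_ne_top _ _)
    refine h1.trans ((measureReal_union_le _ _).trans ?_)
    refine add_le_add ((measureReal_union_le _ _).trans ?_) ?_
    · rw [hnull, add_zero]
      exact measureReal_biUnion_finset_le _ _
    · refine (measureReal_biUnion_finset_le _ _).trans ?_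
      have h2 : ∀ γ ∈ F', μ.real (⋃ j ∈ Finset.range M, (Z 1 j ∩ Z γ⁻¹ j)) ≤ 1 / M := by
        intro γ hγ
        refine (measureReal_biUnion_finset_le _ _).trans ?_
        refine (Finset.sum_le_sum fun j _ => hcol γ⁻¹ (inv_ne_one.2 (Finset.mem_filter.1 hγ).2) j).trans ?_
        rw [Finset.sum_const, Finset.card_range, nsmul_eq_mul]
        apply le_of_eq
        field_simp
      refine (Finset.sum_le_sum h2).trans ?_
      rw [Finset.sum_const, nsmul_eq_mul]
      have h3 : (F'.card : ℝ) ≤ F.card := by exact_mod_cast Finset.card_filter_le _ _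
      calc (F'.card : ℝ) * (1 / M) ≤ F.card * (1 / M) := by gcongr
        _ = F.card / M := by ring
        _ ≤ a / 2 := hFM
  have hj : ∃ j ∈ Finset.range M, a / (2 * M) ≤ μ.real (B j) := by
    by_contra hcon
    push Not at hcon
    have hMn : 0 < M := by exact_mod_cast hM0
    have h1 : ∑ j ∈ Finset.range M, μ.real (B j) < ∑ _j ∈ Finset.range M, a / (2 * M) :=
      Finset.sum_lt_sum_of_nonempty ⟨0, Finset.mem_range.2 hMn⟩ hcon
    rw [Finset.sum_const, Finset.card_range, nsmul_eq_mul] at h1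
    have : (M : ℝ) * (a / (2 * M)) = a / 2 := by field_simp
    linarith
  obtain ⟨j, _, hj⟩ := hj
  refine ⟨B j, fun x hx => hx.1.1, hBm j, hj, ?_⟩
  intro x hx γ hγ hne hcon
  apply hx.2
  simp only [Set.mem_iUnion]
  refine ⟨γ, Finset.mem_filter.2 ⟨hγ, hne⟩, ?_⟩
  have h1 : x (γ⁻¹ * 1) ∈ I j := hcon.1.2
  rw [mul_one] at h1
  exact h1

end
end FC

/-- Bernoulli shift form: for every ε > 0 there is a measurable map
`f : (FreeGroup (Fin 2) → ℝ) → Fin 4` which is a.e. a proper coloring of the Schreier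
graph of the shift (i.e. `f (s • x) ≠ f x` for every generator or inverse generator `s`)
and whose color class `3` has measure less than ε. Here μ is the product over the group
of Lebesgue measure on [0,1], characterized by its finite marginals, and
`(γ • x) δ = x (γ⁻¹ * δ)`. -/
theorem bernoulli_shift_F2_approximate_four_coloring
    (μ : Measure (FreeGroup (Fin 2) → ℝ)) [IsProbabilityMeasure μ]
    (hμ : ∀ s : Finset (FreeGroup (Fin 2)),
      Measure.map (fun (x : FreeGroup (Fin 2) → ℝ) (v : s) => x v) μ
        = Measure.pi (fun _ : s => volume.restrict (Set.Icc (0:ℝ) 1)))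
    (ε : ℝ) (hε : 0 < ε) :
    ∃ f : (FreeGroup (Fin 2) → ℝ) → Fin 4,
      Measurable f ∧
      (∀ᵐ x ∂μ, ∀ s : FreeGroup (Fin 2),
        (∃ i : Fin 2, s = FreeGroup.of i ∨ s = (FreeGroup.of i)⁻¹) →
          f (fun δ => x (s⁻¹ * δ)) ≠ f x) ∧
      μ {x | f x = 3} < ENNReal.ofReal ε := by
  letI := FC.act
  haveI := FC.act_meas
  haveI := FC.act_inv μ hμ
  obtain ⟨f, h1, h2, h3⟩ := FC.final μ (FC.act_sep μ hμ) hε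
  refine ⟨f, h1, ?_, h3⟩
  filter_upwards [h2] with x hx s hs
  obtain ⟨i, rfl | rfl⟩ := hs
  · exact hx (i, true)
  · have := hx (i, false)
    have e : FC.gl (i, false) = (FreeGroup.of i)⁻¹ := by
      simp [FC.gl, FreeGroup.of, FreeGroup.inv_mk, FreeGroup.invRev]
    rw [e] at this
    exact this
end
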